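/- Let x ∈ B_n be cyclically weighted with canonical length ℓ(x) ≥ 2. Then every braid in the reduced super summit set RSSS(x) is cyclically weighted. -/

import Mathlib

/-! Basic definitions for the braid group `B_n`, its Garside structure,
and related notions, following Garside/El-Rifai–Morton.
Generators are indexed by `i : Fin (n-1)`, with `σ i` corresponding to the
Artin generator `σ_{i+1}` (1-based) of the paper. -/

/-- The braid relations, as a set of elements of the free group. -/
def braidRels (n : ℕ) : Set (FreeGroup (Fin (n - 1))) :=
  { r | (∃ i j : Fin (n - 1), (i : ℕ) + 1 < (j : ℕ) ∧
          r = .of i * .of j * (.of i)⁻¹ * (.of j)⁻¹) ∨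
        (∃ i j : Fin (n - 1), (i : ℕ) + 1 = (j : ℕ) ∧
          r = (.of i * .of j * .of i) * (.of j * .of i * .of j)⁻¹) }

/-- The braid group on `n` strands. -/
abbrev BraidGroup (n : ℕ) := PresentedGroup (braidRels n)

namespace BraidGroup

variable {n : ℕ}

/-- The Artin generator `σ_{i+1}` (`i` is a 0-based index). -/
def σ (i : Fin (n - 1)) : BraidGroup n := PresentedGroup.of i

/-- `σ'` with a natural-number 0-based index (junk value `1` out of range). -/
def σ' (n : ℕ) (i : ℕ) : BraidGroup n := if h : i < n - 1 then σ ⟨i, h⟩ else 1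

/-- The fundamental braid `Δ = (σ_1⋯σ_{n-1})(σ_1⋯σ_{n-2})⋯(σ_1σ_2)σ_1`. -/
def Δ (n : ℕ) : BraidGroup n :=
  (((List.range (n - 1)).reverse).map
    (fun j => ((List.range (j + 1)).map (σ' n)).prod)).prod

/-- The monoid of positive braids inside `B_n` (the image of `B_n^+`). -/
def positives (n : ℕ) : Submonoid (BraidGroup n) :=
  Submonoid.closure (Set.range (σ (n := n)))

/-- `x` is a positive braid. -/
def IsPositive (x : BraidGroup n) : Prop := x ∈ positives n

/-- The prefix (left-divisibility) order: `x ≼ y` iff `x⁻¹y` is positive. -/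
def LeftDvd (x y : BraidGroup n) : Prop := ∃ p, IsPositive p ∧ x * p = y

/-- The right-divisibility order: `x ≼_R y` iff `y x⁻¹` is positive. -/
def RightDvd (x y : BraidGroup n) : Prop := ∃ p, IsPositive p ∧ p * x = y

/-- Permutation braids: positive left divisors of `Δ`. -/
def IsPermBraid (x : BraidGroup n) : Prop := IsPositive x ∧ LeftDvd x (Δ n)

/-- The involution `τ` of `B_n`, determined by `τ(σ_i) = σ_{n-i}`
(on 0-based indices: `i ↦ (n-2) - i`, i.e. `Fin.rev`). -/
noncomputable def τ (n : ℕ) : BraidGroup n →* BraidGroup n :=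
  Classical.epsilon (fun f => ∀ i : Fin (n - 1), f (σ i) = σ i.rev)

/-- `τ^u` for an integer `u`: equals `τ` for odd `u` and the identity for even `u`
(`τ` is an involution). -/
noncomputable def τpow (u : ℤ) (x : BraidGroup n) : BraidGroup n :=
  if Even u then x else τ n x

/-- The product `a⬝b` of a permutation braid `a` and a positive braid `b` is left
weighted iff `a* ∧ b = e`, i.e. no generator left-divides both `a* = a⁻¹Δ` and `b`. -/
def IsLeftWeighted (a b : BraidGroup n) : Prop :=
  ∀ i : Fin (n - 1), ¬ (LeftDvd (σ i) (a⁻¹ * Δ n) ∧ LeftDvd (σ i) b)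

/-- `Δ^u x_1 ⋯ x_k` is the left weighted form of `x`, where `L = [x_1, …, x_k]`. -/
def IsWeightedForm (u : ℤ) (L : List (BraidGroup n)) (x : BraidGroup n) : Prop :=
  (∀ a ∈ L, IsPermBraid a ∧ a ≠ 1 ∧ a ≠ Δ n) ∧
  L.Chain' IsLeftWeighted ∧
  x = (Δ n) ^ u * L.prod

/-- The left weighted form of a braid (chosen by choice; it exists and is unique). -/
noncomputable def wf (x : BraidGroup n) : ℤ × List (BraidGroup n) :=
  Classical.epsilon (fun p => IsWeightedForm p.1 p.2 x)

/-- The infimum `inf(x)`. -/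
noncomputable def binf (x : BraidGroup n) : ℤ := (wf x).1

/-- The canonical length `ℓ(x)`. -/
noncomputable def blen (x : BraidGroup n) : ℕ := (wf x).2.length

/-- The supremum `sup(x) = inf(x) + ℓ(x)`. -/
noncomputable def bsup (x : BraidGroup n) : ℤ := binf x + blen x

/-- The head `H(x)`: the first factor of the weighted form. -/
noncomputable def bhead (x : BraidGroup n) : BraidGroup n := ((wf x).2.head?).getD 1

/-- The tail `T(x)`: the last factor of the weighted form. -/
noncomputable def btail (x : BraidGroup n) : BraidGroup n := ((wf x).2.getLast?).getD 1

/-- Cycling: `c(x) = τ^u(H(x))⁻¹ · x · τ^u(H(x))`. -/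
noncomputable def cyc (x : BraidGroup n) : BraidGroup n :=
  (τpow (binf x) (bhead x))⁻¹ * x * τpow (binf x) (bhead x)

/-- Decycling: `d(x) = T(x) · x · T(x)⁻¹`. -/
noncomputable def decyc (x : BraidGroup n) : BraidGroup n :=
  btail x * x * (btail x)⁻¹

/-- `x` is cyclically weighted: `x_k ⬝ τ^u(x_1)` is left weighted. -/
noncomputable def IsCW (x : BraidGroup n) : Prop :=
  IsLeftWeighted (btail x) (τpow (binf x) (bhead x))

/-- `x` is weakly cyclically weighted: `H(x·τ^u(H(x))) = H(x)`. -/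
noncomputable def IsWCW (x : BraidGroup n) : Prop :=
  bhead (x * τpow (binf x) (bhead x)) = bhead x

/-- The summit set of `x`: conjugates with maximal infimum. -/
def SS (x : BraidGroup n) : Set (BraidGroup n) :=
  { y | IsConj x y ∧ ∀ z, IsConj x z → binf z ≤ binf y }

/-- The super summit set of `x`: conjugates with maximal infimum and minimal supremum. -/
def SSS (x : BraidGroup n) : Set (BraidGroup n) :=
  { y | y ∈ SS x ∧ ∀ z, IsConj x z → bsup y ≤ bsup z }

/-- The ultra summit set of `x`. -/
def USS (x : BraidGroup n) : Set (BraidGroup n) :=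
  { y ∈ SSS x | ∃ M : ℕ, 0 < M ∧ cyc^[M] y = y }

/-- The reduced super summit set of `x`. -/
def RSSS (x : BraidGroup n) : Set (BraidGroup n) :=
  { y | IsConj x y ∧ (∃ M : ℕ, 0 < M ∧ cyc^[M] y = y) ∧
        (∃ N : ℕ, 0 < N ∧ decyc^[N] y = y) }

/-- The left meet (greatest common left divisor) of two braids. -/
noncomputable def leftMeet (a b : BraidGroup n) : BraidGroup n :=
  Classical.epsilon (fun m => IsPositive m ∧ LeftDvd m a ∧ LeftDvd m b ∧
    ∀ c, IsPositive c → LeftDvd c a → LeftDvd c b → LeftDvd c m)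

/-- `x` is periodic: some positive power of `x` is a power of `Δ²`. -/
def IsPeriodic (x : BraidGroup n) : Prop :=
  ∃ m : ℕ, 0 < m ∧ ∃ k : ℤ, x ^ m = (Δ n) ^ (2 * k)

/-- The free generator `x_{i+1}` of `π₁` of the `n`-punctured disk (0-based index;
junk value `1` out of range). -/
def freeGen (n : ℕ) (i : ℕ) : FreeGroup (Fin n) := if h : i < n then .of ⟨i, h⟩ else 1

/-- The Artin action of `B_n` on the free group `F_n`:
`σ_i` sends `x_i ↦ x_i x_{i+1} x_i⁻¹`, `x_{i+1} ↦ x_i`, fixing the other generators. -/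
noncomputable def artin (n : ℕ) : BraidGroup n →* Monoid.End (FreeGroup (Fin n)) :=
  Classical.epsilon (fun f => ∀ i : Fin (n - 1),
    f (σ i) = FreeGroup.lift (fun j : Fin n =>
      if (j : ℕ) = (i : ℕ) then freeGen n i * freeGen n (i + 1) * (freeGen n i)⁻¹
      else if (j : ℕ) = (i : ℕ) + 1 then freeGen n i
      else FreeGroup.of j))

/-- The element of `π₁` represented by the round curve enclosing punctures
`I.1 + 1, …, I.2` (1-based): the product `x_{I.1+1} ⋯ x_{I.2}`. -/
def curveWord (n : ℕ) (I : ℕ × ℕ) : FreeGroup (Fin n) :=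
  ((List.range (I.2 - I.1)).map (fun t => freeGen n (I.1 + t))).prod

/-- An essential round curve: it encloses at least `2` and at most `n-1` punctures. -/
def EssentialCurve (n : ℕ) (I : ℕ × ℕ) : Prop :=
  I.1 + 2 ≤ I.2 ∧ I.2 ≤ n ∧ I.2 - I.1 ≤ n - 1

/-- Two round curves are disjoint (as curves): the intervals are disjoint or nested. -/
def CurvesCompatible (I J : ℕ × ℕ) : Prop :=
  I.2 ≤ J.1 ∨ J.2 ≤ I.1 ∨ (I.1 ≤ J.1 ∧ J.2 ≤ I.2) ∨ (J.1 ≤ I.1 ∧ I.2 ≤ J.2)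

/-- `x` is reducible: some conjugate of `x` preserves, up to conjugacy in `π₁`
(i.e. up to isotopy) and orientation, a nonempty system of disjoint essential
round curves. -/
noncomputable def IsReducible (x : BraidGroup n) : Prop :=
  ∃ y, IsConj x y ∧ ∃ F : Finset (ℕ × ℕ), F.Nonempty ∧
    (∀ I ∈ F, EssentialCurve n I) ∧
    (∀ I ∈ F, ∀ J ∈ F, I ≠ J → CurvesCompatible I J) ∧
    (∀ I ∈ F, ∃ J ∈ F, ∃ g : FreeGroup (Fin n),
      artin n y (curveWord n I) = g * curveWord n J * g⁻¹ ∨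
      artin n y (curveWord n I) = g * (curveWord n J)⁻¹ * g⁻¹)

/-- `x` is pseudo-Anosov: neither periodic nor reducible (Nielsen–Thurston). -/
noncomputable def IsPseudoAnosov (x : BraidGroup n) : Prop :=
  ¬ IsPeriodic x ∧ ¬ IsReducible x

/-- `σ_i` (1-based index `i`) left-divides the positive braid `w`, i.e. `i` is
 a descent of `w`. -/
def HasDescent (n : ℕ) (i : ℕ) (w : BraidGroup n) : Prop := LeftDvd (σ' n (i - 1)) w

/-- `D(n,k,i)`: the probability that a product of `k` independent uniformly random
permutation braids begins with the descent `i` (1-based), computed by counting. -/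
noncomputable def descentProb (n k : ℕ) (i : ℕ) : ℝ :=
  ({ f : Fin k → BraidGroup n | (∀ j, IsPermBraid (f j)) ∧
      HasDescent n i (List.ofFn f).prod }.ncard : ℝ) / (n.factorial ^ k : ℝ)

/-- `D(n,k)`: the expected number of descents of a product of `k` random
permutation braids. -/
noncomputable def descentExp (n k : ℕ) : ℝ :=
  ∑ i ∈ Finset.Icc 1 (n - 1), descentProb n k i

/-- `d(n,k) = D(n,k) - D(n,k-1)`: the expected number of descents contributed by
the `k`-th factor. -/
noncomputable def descentInc (n k : ℕ) : ℝ := descentExp n k - descentExp n (k - 1)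


namespace BraidAux

/-- Relations of the positive braid monoid. -/
inductive MRel (m : ℕ) : FreeMonoid (Fin m) → FreeMonoid (Fin m) → Prop
  | comm (i j : Fin m) (h : (i : ℕ) + 1 < j) :
      MRel m (FreeMonoid.of i * FreeMonoid.of j) (FreeMonoid.of j * FreeMonoid.of i)
  | braid (i j : Fin m) (h : (i : ℕ) + 1 = j) :
      MRel m (FreeMonoid.of i * FreeMonoid.of j * FreeMonoid.of i)
        (FreeMonoid.of j * FreeMonoid.of i * FreeMonoid.of j)

/-- The positive braid monoid. -/
abbrev BM (m : ℕ) := PresentedMonoid (MRel m)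

/-- The class of a word. -/
abbrev cls {m : ℕ} : FreeMonoid (Fin m) →* BM m := PresentedMonoid.mk (MRel m)

/-- The generators. -/
def gs {m : ℕ} (i : Fin m) : BM m := PresentedMonoid.of (MRel m) i

def Cm {m : ℕ} (i j : Fin m) : Prop := (i : ℕ) + 1 < j ∨ (j : ℕ) + 1 < i
def Ad {m : ℕ} (i j : Fin m) : Prop := (i : ℕ) + 1 = j ∨ (j : ℕ) + 1 = i

variable {m : ℕ}

lemma Cm.symm {i j : Fin m} (h : Cm i j) : Cm j i := Or.symm h
lemma Ad.symm {i j : Fin m} (h : Ad i j) : Ad j i := Or.symm h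

lemma tricho (i j : Fin m) : i = j ∨ Cm i j ∨ Ad i j := by
  unfold Cm Ad
  by_cases h : i = j
  · exact Or.inl h
  · have : (i : ℕ) ≠ j := fun h' => h (Fin.ext h')
    omega

lemma gs_comm {i j : Fin m} (h : Cm i j) : gs i * gs j = gs j * gs i := by
  rcases h with h | h
  · exact PresentedMonoid.mk_eq_mk_of_rel (MRel.comm i j h)
  · exact (PresentedMonoid.mk_eq_mk_of_rel (MRel.comm j i h)).symm

lemma gs_braid {i j : Fin m} (h : Ad i j) : gs i * gs j * gs i = gs j * gs i * gs j := by
  rcases h with h | h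
  · exact PresentedMonoid.mk_eq_mk_of_rel (MRel.braid i j h)
  · exact (PresentedMonoid.mk_eq_mk_of_rel (MRel.braid j i h)).symm

lemma gs_comm' {i j : Fin m} (h : Cm i j) (z : BM m) :
    gs i * (gs j * z) = gs j * (gs i * z) := by
  rw [← mul_assoc, gs_comm h, mul_assoc]

lemma gs_braid' {i j : Fin m} (h : Ad i j) (z : BM m) :
    gs i * (gs j * (gs i * z)) = gs j * (gs i * (gs j * z)) := by
  rw [← mul_assoc, ← mul_assoc, gs_braid h, mul_assoc, mul_assoc]

/-- Length. -/
def mlen : BM m →* Multiplicative ℕ :=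
  PresentedMonoid.lift (fun _ => Multiplicative.ofAdd 1) (by
    intro a b h
    cases h <;> simp [mul_comm])

def ml (x : BM m) : ℕ := Multiplicative.toAdd (mlen x)

lemma ml_mul (x y : BM m) : ml (x * y) = ml x + ml y := by simp [ml]
lemma ml_gs (i : Fin m) : ml (gs i) = 1 := rfl

/-- The conclusion of Garside's key lemma. -/
def KC (i j : Fin m) (X Y : BM m) : Prop :=
  (i = j ∧ X = Y) ∨ (Cm i j ∧ ∃ Z, X = gs j * Z ∧ Y = gs i * Z) ∨
    (Ad i j ∧ ∃ Z, X = gs j * (gs i * Z) ∧ Y = gs i * (gs j * Z))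

lemma KC.symm {i j : Fin m} {X Y : BM m} (h : KC i j X Y) : KC j i Y X := by
  rcases h with ⟨h, h'⟩ | ⟨h, Z, h1, h2⟩ | ⟨h, Z, h1, h2⟩
  · exact Or.inl ⟨h.symm, h'.symm⟩
  · exact Or.inr (Or.inl ⟨h.symm, Z, h2, h1⟩)
  · exact Or.inr (Or.inr ⟨h.symm, Z, h2, h1⟩)

lemma not_Cm_Ad {i j : Fin m} (h : Cm i j) (h' : Ad i j) : False := by
  unfold Cm Ad at *; omega
lemma Cm_irrefl {i : Fin m} (h : Cm i i) : False := by unfold Cm at h; omega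
lemma Ad_irrefl {i : Fin m} (h : Ad i i) : False := by unfold Ad at h; omega

lemma KC.cm {i j : Fin m} {X Y : BM m} (h : KC i j X Y) (hc : Cm i j) :
    ∃ Z, X = gs j * Z ∧ Y = gs i * Z := by
  rcases h with ⟨rfl, h'⟩ | ⟨h, h'⟩ | ⟨h, h'⟩
  · exact (Cm_irrefl hc).elim
  · exact h'
  · exact (not_Cm_Ad hc h).elim

lemma KC.ad {i j : Fin m} {X Y : BM m} (h : KC i j X Y) (hc : Ad i j) :
    ∃ Z, X = gs j * (gs i * Z) ∧ Y = gs i * (gs j * Z) := by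
  rcases h with ⟨rfl, h'⟩ | ⟨h, h'⟩ | ⟨h, h'⟩
  · exact (Ad_irrefl hc).elim
  · exact (not_Cm_Ad h hc).elim
  · exact h'

lemma KC.eq {i : Fin m} {X Y : BM m} (h : KC i i X Y) : X = Y := by
  rcases h with ⟨-, h'⟩ | ⟨h, h'⟩ | ⟨h, h'⟩
  · exact h'
  · exact (Cm_irrefl h).elim
  · exact (Ad_irrefl h).elim

/-- The key lemma below length `N`. -/
def KeyBelow (m N : ℕ) : Prop :=
  ∀ (i j : Fin m) (X Y : BM m), ml X < N → gs i * X = gs j * Y → KC i j X Y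

lemma trans_b {N : ℕ} (K : KeyBelow m N) {i k j : Fin m} {A B : BM m}
    (hki : Ad k i) (hkj : Cm k j)
    (hl : ml (gs i * (gs k * A)) = N)
    (hW : gs i * (gs k * A) = gs j * B) :
    KC i j (gs k * (gs i * A)) (gs k * B) := by
  have l1 : ml (gs k * A) < N := by rw [ml_mul, ml_gs] at hl; omega
  have l2 : ml A < N := by rw [ml_mul, ml_gs] at l1; omega
  have h1 := K _ _ _ _ l1 hW
  rcases tricho i j with rfl | hij | hij
  · exact (not_Cm_Ad hkj hki).elim
  · obtain ⟨Z, e1, rfl⟩ := h1.cm hij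
    obtain ⟨Z', rfl, rfl⟩ := (K _ _ _ _ l2 e1).cm hkj
    refine Or.inr (Or.inl ⟨hij, gs k * (gs i * Z'), ?_, ?_⟩)
    · rw [gs_comm' hij, gs_comm' hkj]
    · rw [gs_braid' hki]
  · obtain ⟨Z, e1, rfl⟩ := h1.ad hij
    obtain ⟨Z1, rfl, e2⟩ := (K _ _ _ _ l2 e1).cm hkj
    have l3 : ml Z < N := by
      have := congrArg ml e1
      simp only [ml_mul, ml_gs] at this l2 ⊢
      omega
    obtain ⟨Z2, rfl, rfl⟩ := (K _ _ _ _ l3 e2).ad hki.symm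
    refine Or.inr (Or.inr ⟨hij, gs k * (gs i * (gs j * Z2)), ?_, ?_⟩)
    · rw [gs_braid' hij, gs_comm' hkj, ← gs_comm' hkj Z2, gs_braid' hki]
    · rw [← gs_comm' hkj, gs_braid' hki, gs_braid' hij, gs_comm' hkj]

lemma trans_K {N : ℕ} (K : KeyBelow m N) {i k j : Fin m} {X W Y : BM m}
    (hl : ml W = N) (h1 : KC i k X W) (h2 : KC k j W Y) : KC i j X Y := by
  rcases h1 with ⟨rfl, rfl⟩ | ⟨hik, A, rfl, hA⟩ | ⟨hik, A, rfl, hA⟩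
  · exact h2
  · rcases h2 with ⟨rfl, rfl⟩ | ⟨hkj, B, hB, rfl⟩ | ⟨hkj, B, hB, rfl⟩
    · exact Or.inr (Or.inl ⟨hik, A, rfl, hA⟩)
    · have l1 : ml A < N := by rw [hA, ml_mul, ml_gs] at hl; omega
      rcases K _ _ _ _ l1 (hA.symm.trans hB) with ⟨rfl, rfl⟩ | ⟨hij, Z, rfl, rfl⟩ | ⟨hij, Z, rfl, rfl⟩
      · exact Or.inl ⟨rfl, rfl⟩
      · exact Or.inr (Or.inl ⟨hij, gs k * Z, gs_comm' hkj _, gs_comm' hik.symm _⟩)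
      · refine Or.inr (Or.inr ⟨hij, gs k * Z, ?_, ?_⟩)
        · rw [gs_comm' hkj, gs_comm' hik]
        · rw [gs_comm' hik.symm, gs_comm' hkj]
    · refine (trans_b K hkj hik.symm (hB ▸ hl) (hB.symm.trans hA)).symm
  · rcases h2 with ⟨rfl, rfl⟩ | ⟨hkj, B, hB, rfl⟩ | ⟨hkj, B, hB, rfl⟩
    · exact Or.inr (Or.inr ⟨hik, A, rfl, hA⟩)
    · exact trans_b K hik.symm hkj (hA ▸ hl) (hA.symm.trans hB)
    · have l1 : ml (gs k * A) < N := by rw [hA, ml_mul, ml_gs] at hl; omega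
      have l1' : ml (gs k * B) < N := by rw [hB, ml_mul, ml_gs] at hl; omega
      have l2 : ml A < N := by rw [ml_mul, ml_gs] at l1; omega
      have l2' : ml B < N := by rw [ml_mul, ml_gs] at l1'; omega
      have h := K _ _ _ _ l1 (hA.symm.trans hB)
      rcases tricho i j with rfl | hij | hij
      · have := (K _ _ _ _ l2 h.eq).eq
        exact Or.inl ⟨rfl, by rw [this]⟩
      · obtain ⟨Z, e1, e2⟩ := h.cm hij
        obtain ⟨Z1, rfl, e3⟩ := (K _ _ _ _ l2 e1).ad hkj
        obtain ⟨Z2, rfl, e4⟩ := (K _ _ _ _ l2' e2).ad hik.symm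
        have l3 : ml (gs j * Z1) < N := by
          simp only [ml_mul, ml_gs] at l2 ⊢
          omega
        have e5 := (K _ _ _ _ l3 (e3.symm.trans e4)).eq
        have l4 : ml Z1 < N := by
          simp only [ml_mul, ml_gs] at l3 ⊢
          omega
        obtain ⟨Z3, rfl, rfl⟩ := (K _ _ _ _ l4 e5).cm hij.symm
        refine Or.inr (Or.inl ⟨hij, gs k * (gs j * (gs i * (gs k * Z3))), ?_, ?_⟩)
        · rw [gs_comm' hij, ← gs_braid' hik.symm, gs_braid' hkj]
        · rw [← gs_comm' hij, ← gs_braid' hkj, gs_braid' hik.symm, gs_comm' hij]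
      · exfalso
        unfold Ad at *
        omega

/-- Key relation on words. -/
def KW (u v : FreeMonoid (Fin m)) : Prop :=
  (u = 1 ∧ v = 1) ∨ ∃ i j x y, u = FreeMonoid.of i * x ∧ v = FreeMonoid.of j * y ∧
    KC i j (cls x) (cls y)

lemma cls_of (i : Fin m) : cls (FreeMonoid.of i) = gs i := rfl

lemma of_mul_inj {i j : Fin m} {x y : FreeMonoid (Fin m)}
    (h : FreeMonoid.of i * x = FreeMonoid.of j * y) : i = j ∧ x = y := by
  have h' : (i :: x.toList) = j :: y.toList := h
  simp at h'
  exact h'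

lemma key_words {N : ℕ} (K : KeyBelow m N) {u v : FreeMonoid (Fin m)}
    (h : ConGen.Rel (MRel m) u v) : u.length ≤ N + 1 → KW u v := by
  have len_eq : ∀ {u v : FreeMonoid (Fin m)}, ConGen.Rel (MRel m) u v → u.length = v.length := by
    intro u v h
    induction h with
    | of x y h => cases h <;> simp
    | refl x => rfl
    | symm _ ih => exact ih.symm
    | trans _ _ h1 h2 => exact h1.trans h2
    | mul _ _ h1 h2 => simp [h1, h2]
  have ml_len : ∀ u : FreeMonoid (Fin m), ml (cls u) = u.length := by
    intro u
    induction u using FreeMonoid.inductionOn' with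
    | one => rfl
    | of_mul i u ih => rw [map_mul, ml_mul, ih, cls_of, ml_gs]; simp
  induction h with
  | of x y h =>
    intro _
    right
    cases h with
    | comm i j h =>
      refine ⟨i, j, _, _, rfl, rfl, Or.inr (Or.inl ⟨Or.inl h, 1, ?_, ?_⟩)⟩ <;> simp [cls_of]
    | braid i j h =>
      refine ⟨i, j, _, _, mul_assoc _ _ _, mul_assoc _ _ _, Or.inr (Or.inr ⟨Or.inl h, 1, ?_, ?_⟩)⟩ <;>
        simp [cls_of]
  | refl x =>
    intro _
    induction x using FreeMonoid.casesOn with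
    | one => exact Or.inl ⟨rfl, rfl⟩
    | of_mul i x => exact Or.inr ⟨i, i, x, x, rfl, rfl, Or.inl ⟨rfl, rfl⟩⟩
  | symm h ih =>
    intro hl
    rcases ih (by rw [len_eq h]; exact hl) with ⟨h1, h2⟩ | ⟨i, j, x, y, h1, h2, h3⟩
    · exact Or.inl ⟨h2, h1⟩
    · exact Or.inr ⟨j, i, y, x, h2, h1, h3.symm⟩
  | @trans a b c h1 h2 ih1 ih2 =>
    intro hl
    have hlb : b.length ≤ N + 1 := by rw [← len_eq h1]; exact hl
    rcases ih1 hl with ⟨e1, e2⟩ | ⟨i, k, x, w, e1, e2, e3⟩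
    · rcases ih2 hlb with ⟨e1', e2'⟩ | ⟨k', j, w', y, e1', e2', e3'⟩
      · exact Or.inl ⟨e1, e2'⟩
      · have := len_eq h2
        exfalso
        rw [e2] at e1'
        have := congrArg FreeMonoid.length e1'
        simp at this
        omega
    · rcases ih2 hlb with ⟨e1', e2'⟩ | ⟨k', j, w', y, e1', e2', e3'⟩
      · exfalso
        rw [e2] at e1'
        have := congrArg FreeMonoid.length e1'
        simp at this
      · obtain ⟨rfl, rfl⟩ := of_mul_inj (e2.symm.trans e1')
        refine Or.inr ⟨i, j, x, y, e1, e2', ?_⟩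
        have hw : ml (cls w) ≤ N := by
          rw [ml_len]; rw [e2] at hlb; simp at hlb; omega
        exact trans_K (N := ml (cls w))
          (fun i j X Y h => K i j X Y (by omega)) rfl e3 e3'
  | @mul a b c d h1 h2 ih1 ih2 =>
    intro hl
    simp only [FreeMonoid.length_mul] at hl
    have hcd : cls c = cls d := PresentedMonoid.mk_eq_mk_iff.2 h2
    rcases ih1 (by omega) with ⟨rfl, rfl⟩ | ⟨i, j, x, y, rfl, rfl, e3⟩
    · simpa using ih2 (by omega)
    · refine Or.inr ⟨i, j, x * c, y * d, mul_assoc _ _ _, mul_assoc _ _ _, ?_⟩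
      rw [map_mul, map_mul, hcd]
      rcases e3 with ⟨h, h'⟩ | ⟨h, Z, h1, h2⟩ | ⟨h, Z, h1, h2⟩
      · exact Or.inl ⟨h, by rw [h']⟩
      · exact Or.inr (Or.inl ⟨h, Z * cls d, by rw [h1, mul_assoc], by rw [h2, mul_assoc]⟩)
      · exact Or.inr (Or.inr ⟨h, Z * cls d, by rw [h1]; simp only [mul_assoc],
          by rw [h2]; simp only [mul_assoc]⟩)

lemma keyBelow (m N : ℕ) : KeyBelow m N := by
  induction N with
  | zero => intro i j X Y h; omega
  | succ N ih =>
    intro i j X Y hl h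
    obtain ⟨x, rfl⟩ := PresentedMonoid.surjective_mk X
    obtain ⟨y, rfl⟩ := PresentedMonoid.surjective_mk Y
    have ml_len : ∀ u : FreeMonoid (Fin m), ml (cls u) = u.length := by
      intro u
      induction u using FreeMonoid.inductionOn' with
      | one => rfl
      | of_mul i u ih => rw [map_mul, ml_mul, ih, cls_of, ml_gs]; simp
    have h' : cls (FreeMonoid.of i * x) = cls (FreeMonoid.of j * y) := by
      rw [map_mul, map_mul]; exact h
    have h'' : ConGen.Rel (MRel m) _ _ := PresentedMonoid.mk_eq_mk_iff.1 h'
    have hl' : ml (PresentedMonoid.mk (MRel m) x) = x.length := ml_len x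
    rcases key_words ih h'' (by simp; omega) with ⟨e1, -⟩ | ⟨i', j', x', y', e1, e2, e3⟩
    · have := congrArg FreeMonoid.length e1
      simp at this
    · obtain ⟨rfl, rfl⟩ := of_mul_inj e1
      obtain ⟨rfl, rfl⟩ := of_mul_inj e2
      exact e3

/-- Garside's key lemma. -/
lemma key {i j : Fin m} {X Y : BM m} (h : gs i * X = gs j * Y) : KC i j X Y :=
  keyBelow m (ml X + 1) i j X Y (by omega) h

lemma BM_induction {p : BM m → Prop} (h1 : p 1) (h2 : ∀ i x, p x → p (gs i * x)) (x : BM m) :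
    p x := by
  obtain ⟨w, rfl⟩ := PresentedMonoid.surjective_mk x
  induction w using FreeMonoid.inductionOn' with
  | one => exact h1
  | of_mul i u ih => rw [map_mul]; exact h2 i _ ih

lemma BM_left_cancel (a : BM m) : ∀ {b c : BM m}, a * b = a * c → b = c := by
  induction a using BM_induction with
  | h1 => intro b c h; simpa using h
  | h2 i x ih =>
    intro b c h
    rw [mul_assoc, mul_assoc] at h
    exact ih (key h).eq

end BraidAux

namespace BraidAux

section DeltaWords

variable {N : Type*} [Monoid N] (s : ℕ → N)

def Pi (k : ℕ) : N := ((List.range k).map s).prod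

def De (k : ℕ) : N :=
  (((List.range k).reverse).map (fun j => ((List.range (j + 1)).map s).prod)).prod

lemma Pi_zero : Pi s 0 = 1 := by simp [Pi]
lemma Pi_succ (k : ℕ) : Pi s (k + 1) = Pi s k * s k := by
  simp [Pi, List.range_succ]
lemma De_zero : De s 0 = 1 := by simp [De]
lemma De_succ (k : ℕ) : De s (k + 1) = Pi s (k + 1) * De s k := by
  unfold De
  rw [List.range_succ, List.reverse_append]
  simp only [List.reverse_cons, List.reverse_nil, List.nil_append, List.map_append, List.map_cons, List.map_nil,
    List.prod_append, List.prod_cons, List.prod_nil, mul_one, Pi]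

variable {s} {M : ℕ}

lemma Pi_comm (hc : ∀ i j, i + 1 < j → j < M → s i * s j = s j * s i)
    {j : ℕ} (hj : j < M) : ∀ k, k < j → s j * Pi s k = Pi s k * s j := by
  intro k
  induction k with
  | zero => intro _; simp [Pi_zero]
  | succ k ih =>
    intro hk
    rw [Pi_succ, ← mul_assoc, ih (by omega), mul_assoc, mul_assoc, hc k j hk hj]

lemma De_comm (hc : ∀ i j, i + 1 < j → j < M → s i * s j = s j * s i)
    {j : ℕ} (hj : j < M) : ∀ k, k < j → s j * De s k = De s k * s j := by
  intro k
  induction k with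
  | zero => intro _; simp [De_zero]
  | succ k ih =>
    intro hk
    rw [De_succ, ← mul_assoc, Pi_comm hc hj _ hk, mul_assoc, ih (by omega), mul_assoc]

lemma Pi_shift (hc : ∀ i j, i + 1 < j → j < M → s i * s j = s j * s i)
    (hb : ∀ i, i + 1 < M → s i * s (i + 1) * s i = s (i + 1) * s i * s (i + 1))
    {i : ℕ} : ∀ j, i + 1 < j → j ≤ M → s (i + 1) * Pi s j = Pi s j * s i := by
  intro j hj
  induction j, hj using Nat.le_induction with
  | base =>
    intro hM
    rw [Pi_succ, Pi_succ, ← mul_assoc, ← mul_assoc, Pi_comm hc (by omega) i (by omega)]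
    have := hb i (by omega)
    calc Pi s i * s (i + 1) * s i * s (i + 1) = Pi s i * (s (i + 1) * s i * s (i + 1)) := by
          simp only [mul_assoc]
      _ = _ := by rw [← this]; simp only [mul_assoc]
  | succ j hj ih =>
    intro hM
    rw [Pi_succ, ← mul_assoc, ih (by omega), mul_assoc, mul_assoc, hc i j (by omega) (by omega)]

lemma Pi_top (hc : ∀ i j, i + 1 < j → j < M → s i * s j = s j * s i)
    (hb : ∀ i, i + 1 < M → s i * s (i + 1) * s i = s (i + 1) * s i * s (i + 1))
    : ∀ k, k < M → s 0 * (Pi s (k + 1) * Pi s k) = Pi s (k + 1) * Pi s k * s k := by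
  intro k
  induction k with
  | zero => intro _; simp [Pi_zero, Pi_succ]
  | succ k ih =>
    intro hk
    have e : Pi s (k + 1 + 1) * Pi s (k + 1) = Pi s (k + 1) * Pi s k * (s (k + 1) * s k) := by
      rw [Pi_succ s (k + 1)]
      nth_rewrite 2 [Pi_succ]
      calc Pi s (k + 1) * s (k + 1) * (Pi s k * s k)
          = Pi s (k + 1) * (s (k + 1) * Pi s k) * s k := by simp only [mul_assoc]
        _ = _ := by rw [Pi_comm hc hk k (by omega)]; simp only [mul_assoc]
    rw [e, ← mul_assoc, ih (by omega)]
    have := hb k hk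
    calc Pi s (k + 1) * Pi s k * s k * (s (k + 1) * s k)
        = Pi s (k + 1) * Pi s k * (s k * s (k + 1) * s k) := by simp only [mul_assoc]
      _ = _ := by rw [this]; simp only [mul_assoc]

lemma De_conj (hc : ∀ i j, i + 1 < j → j < M → s i * s j = s j * s i)
    (hb : ∀ i, i + 1 < M → s i * s (i + 1) * s i = s (i + 1) * s i * s (i + 1))
    : ∀ k, k ≤ M → ∀ i, i < k → s i * De s k = De s k * s (k - 1 - i) := by
  intro k
  induction k with
  | zero => intro _ i hi; omega
  | succ k ih =>
    intro hk i hi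
    rcases i with _ | i
    · rcases k with _ | k
      · simp [De_succ, De_zero, Pi_succ, Pi_zero]
      · have : k + 1 + 1 - 1 - 0 = k + 1 := by omega
        rw [this, De_succ, De_succ]
        calc s 0 * (Pi s (k + 1 + 1) * (Pi s (k + 1) * De s k))
            = s 0 * (Pi s (k + 1 + 1) * Pi s (k + 1)) * De s k := by simp only [mul_assoc]
          _ = Pi s (k + 1 + 1) * Pi s (k + 1) * (s (k + 1) * De s k) := by
            rw [Pi_top hc hb (k + 1) (by omega)]; simp only [mul_assoc]
          _ = _ := by rw [De_comm hc (by omega) k (by omega)]; simp only [mul_assoc]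
    · rw [De_succ, ← mul_assoc, Pi_shift hc hb (k + 1) (by omega) hk, mul_assoc,
        ih (by omega) i (by omega), mul_assoc]
      congr 3
      omega

lemma De_dvd (hc : ∀ i j, i + 1 < j → j < M → s i * s j = s j * s i)
    (hb : ∀ i, i + 1 < M → s i * s (i + 1) * s i = s (i + 1) * s i * s (i + 1))
    : ∀ k, k ≤ M → ∀ i, i < k → ∃ R, De s k = s i * R := by
  intro k
  induction k with
  | zero => intro _ i hi; omega
  | succ k ih =>
    intro hk i hi
    rcases i with _ | i
    · have : ∀ j, ∃ R, Pi s (j + 1) = s 0 * R := by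
        intro j
        induction j with
        | zero => exact ⟨1, by simp [Pi_succ, Pi_zero]⟩
        | succ j ih =>
          obtain ⟨R, hR⟩ := ih
          exact ⟨R * s (j + 1), by rw [Pi_succ, hR, mul_assoc]⟩
      obtain ⟨R, hR⟩ := this k
      exact ⟨R * De s k, by rw [De_succ, hR, mul_assoc]⟩
    · obtain ⟨R, hR⟩ := ih (by omega) i (by omega)
      refine ⟨Pi s (k + 1) * R, ?_⟩
      rw [De_succ, hR, ← mul_assoc, ← mul_assoc, Pi_shift hc hb (k + 1) (by omega) hk]

end DeltaWords

/-- Generators with natural number index. -/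
def gs' (m : ℕ) (i : ℕ) : BM m := if h : i < m then gs ⟨i, h⟩ else 1

/-- The fundamental element of the monoid. -/
def DM (m : ℕ) : BM m := De (gs' m) m

variable {m : ℕ}

lemma gs'_hc : ∀ i j, i + 1 < j → j < m → gs' m i * gs' m j = gs' m j * gs' m i := by
  intro i j h1 h2
  have h3 : i < m := by omega
  simp only [gs', h2, h3, dif_pos]
  exact gs_comm (Or.inl h1)

lemma gs'_hb : ∀ i, i + 1 < m →
    gs' m i * gs' m (i + 1) * gs' m i = gs' m (i + 1) * gs' m i * gs' m (i + 1) := by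
  intro i h1
  have h3 : i < m := by omega
  simp only [gs', h1, h3, dif_pos]
  exact gs_braid (Or.inl rfl)

lemma gs'_val (i : Fin m) : gs' m i = gs i := by simp [gs']

lemma DM_conj (i : Fin m) : gs i * DM m = DM m * gs i.rev := by
  have := De_conj (gs'_hc (m := m)) gs'_hb m le_rfl i i.2
  rw [gs'_val] at this
  have e : m - 1 - (i : ℕ) = (i.rev : ℕ) := by rw [Fin.val_rev]; omega
  rw [e, gs'_val] at this
  exact this

lemma DM_dvd (i : Fin m) : ∃ R, DM m = gs i * R := by
  have := De_dvd (gs'_hc (m := m)) gs'_hb m le_rfl i i.2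
  rwa [gs'_val] at this

/-- The central element. -/
def ZM (m : ℕ) : BM m := DM m * DM m

lemma ZM_central (x : BM m) : x * ZM m = ZM m * x := by
  induction x using BM_induction with
  | h1 => simp
  | h2 i x ih =>
    rw [mul_assoc, ih, ← mul_assoc, ← mul_assoc]
    congr 1
    unfold ZM
    rw [← mul_assoc, DM_conj, mul_assoc, DM_conj, Fin.rev_rev, mul_assoc]

lemma ZM_pow_central (x : BM m) (k : ℕ) : x * ZM m ^ k = ZM m ^ k * x :=
  (Commute.pow_right (show Commute x (ZM m) from ZM_central x) k)

lemma ZM_right (x : BM m) : ∃ y k, x * y = ZM m ^ k := by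
  induction x using BM_induction with
  | h1 => exact ⟨1, 0, by simp⟩
  | h2 i x ih =>
    obtain ⟨y, k, h⟩ := ih
    obtain ⟨R, hR⟩ := DM_dvd i
    refine ⟨y * (R * DM m), k + 1, ?_⟩
    calc gs i * x * (y * (R * DM m)) = gs i * ((x * y) * (R * DM m)) := by simp only [mul_assoc]
      _ = gs i * (R * DM m) * ZM m ^ k := by rw [h, ← ZM_pow_central]; simp only [mul_assoc]
      _ = (gs i * R) * DM m * ZM m ^ k := by simp only [mul_assoc]
      _ = _ := by rw [← hR, pow_succ']; rfl

lemma ZM_left (x : BM m) : ∃ y k, y * x = ZM m ^ k := by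
  obtain ⟨y, k, h⟩ := ZM_right x
  refine ⟨y, k, BM_left_cancel x ?_⟩
  rw [← mul_assoc, h, ZM_pow_central]

noncomputable instance : OreLocalization.OreSet (⊤ : Submonoid (BM m)) where
  ore_right_cancel := by
    rintro a b ⟨s, hs⟩ h
    obtain ⟨y, k, hy⟩ := ZM_right s
    refine ⟨⟨ZM m ^ k, trivial⟩, ?_⟩
    show ZM m ^ k * a = ZM m ^ k * b
    rw [← ZM_pow_central, ← ZM_pow_central, ← hy, ← mul_assoc, ← mul_assoc]
    exact congrArg (· * y) h
  oreNum r s := r * (ZM_left (s : BM m)).choose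
  oreDenom r s := ⟨ZM m ^ (ZM_left (s : BM m)).choose_spec.choose, trivial⟩
  ore_eq := by
    intro r s
    show ZM m ^ _ * r = r * _ * s
    rw [mul_assoc]
    exact (ZM_pow_central r _).symm.trans
      (congrArg (r * ·) (ZM_left (s : BM m)).choose_spec.choose_spec.symm)

abbrev Loc (m : ℕ) := OreLocalization (⊤ : Submonoid (BM m)) (BM m)

noncomputable def toLoc (m : ℕ) : BM m →* Loc m := OreLocalization.numeratorHom

lemma toLoc_inj : Function.Injective (toLoc m) := by
  intro a b h
  have h' : (a /ₒ (1 : (⊤ : Submonoid (BM m)))) = b /ₒ (1 : (⊤ : Submonoid (BM m))) := h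
  rw [OreLocalization.oreDiv_eq_iff] at h'
  obtain ⟨u, v, h1, h2⟩ := h'
  have h2' : (u : BM m) = v := by simpa using h2
  have h1' : (u : BM m) * b = v * a := h1
  rw [← h2'] at h1'
  exact (BM_left_cancel _ h1').symm

noncomputable def toU (i : Fin m) : (Loc m)ˣ :=
  OreLocalization.numeratorUnit (⟨gs i, trivial⟩ : (⊤ : Submonoid (BM m)))

lemma toU_val (i : Fin m) : (toU i : Loc m) = toLoc m (gs i) := rfl

noncomputable def gToU (n : ℕ) : BraidGroup n →* (Loc (n - 1))ˣ :=
  PresentedGroup.toGroup (f := toU) (by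
    rintro r (⟨i, j, h, rfl⟩ | ⟨i, j, h, rfl⟩)
    · simp only [map_mul, map_inv, FreeGroup.lift_apply_of]
      rw [mul_inv_eq_one, mul_inv_eq_iff_eq_mul]
      ext
      simp only [Units.val_mul, toU_val, ← map_mul]
      rw [gs_comm (Or.inl h)]
    · simp only [map_mul, map_inv, FreeGroup.lift_apply_of]
      rw [mul_inv_eq_one]
      ext
      simp only [Units.val_mul, toU_val, ← map_mul]
      rw [gs_braid (Or.inl h)])

variable {n : ℕ}

lemma gToU_σ (i : Fin (n - 1)) : gToU n (σ i) = toU i := PresentedGroup.toGroup.of _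

lemma σ_comm {i j : Fin (n - 1)} (h : (i : ℕ) + 1 < j) : σ i * σ j = σ j * σ i := by
  have : (PresentedGroup.mk (braidRels n)) (.of i * .of j * (.of i)⁻¹ * (.of j)⁻¹) = 1 :=
    PresentedGroup.one_of_mem (Or.inl ⟨i, j, h, rfl⟩)
  simp only [map_mul, map_inv] at this
  rw [mul_inv_eq_one, mul_inv_eq_iff_eq_mul] at this
  exact this

lemma σ_braid {i j : Fin (n - 1)} (h : (i : ℕ) + 1 = j) : σ i * σ j * σ i = σ j * σ i * σ j := by
  have : (PresentedGroup.mk (braidRels n)) ((.of i * .of j * .of i) * (.of j * .of i * .of j)⁻¹) = 1 :=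
    PresentedGroup.one_of_mem (Or.inr ⟨i, j, h, rfl⟩)
  simp only [map_mul, map_inv] at this
  rw [mul_inv_eq_one] at this
  exact this

/-- The embedding of the monoid in the group. -/
def emb (n : ℕ) : BM (n - 1) →* BraidGroup n :=
  PresentedMonoid.lift (fun i => σ i) (by
    intro a b h
    cases h with
    | comm i j h => simpa using σ_comm h
    | braid i j h => simpa using σ_braid h)

lemma emb_gs (i : Fin (n - 1)) : emb n (gs i) = σ i := rfl

lemma emb_inj : Function.Injective (emb n) := by
  have : ∀ x, ((gToU n (emb n x) : (Loc (n - 1))ˣ) : Loc (n - 1)) = toLoc _ x := by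
    intro x
    induction x using BM_induction with
    | h1 => simp
    | h2 i x ih => rw [map_mul, map_mul, map_mul, emb_gs, gToU_σ, Units.val_mul, ih, toU_val]
  intro a b h
  apply toLoc_inj
  rw [← this, ← this, h]

lemma emb_DM : emb n (DM (n - 1)) = Δ n := by
  have : ∀ i, emb n (gs' (n - 1) i) = σ' n i := by
    intro i
    unfold gs' σ'
    split
    · rfl
    · simp
  unfold DM De Δ
  rw [map_list_prod, List.map_map]
  congr 2
  funext j
  simp only [Function.comp, map_list_prod, List.map_map]
  congr 2
  funext j
  exact this j

lemma pos_iff {x : BraidGroup n} : IsPositive x ↔ ∃ a, emb n a = x := by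
  constructor
  · intro h
    induction h using Submonoid.closure_induction with
    | mem x hx => obtain ⟨i, rfl⟩ := hx; exact ⟨gs i, rfl⟩
    | one => exact ⟨1, map_one _⟩
    | mul x y _ _ hx hy =>
      obtain ⟨a, rfl⟩ := hx
      obtain ⟨b, rfl⟩ := hy
      exact ⟨a * b, map_mul _ _ _⟩
  · rintro ⟨a, rfl⟩
    induction a using BM_induction with
    | h1 => rw [map_one]; exact Submonoid.one_mem _
    | h2 i x ih =>
      rw [map_mul]
      exact Submonoid.mul_mem _ (Submonoid.subset_closure ⟨i, rfl⟩) ih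

end BraidAux

namespace BraidAux

variable {n : ℕ}

/-- The exponent-sum homomorphism. -/
def glenHom (n : ℕ) : BraidGroup n →* Multiplicative ℤ :=
  PresentedGroup.toGroup (f := fun _ => Multiplicative.ofAdd 1) (by
    rintro r (⟨i, j, h, rfl⟩ | ⟨i, j, h, rfl⟩) <;> simp)

def glen (x : BraidGroup n) : ℤ := Multiplicative.toAdd (glenHom n x)

lemma glen_mul (x y : BraidGroup n) : glen (x * y) = glen x + glen y := by simp [glen]
lemma glen_one : glen (1 : BraidGroup n) = 0 := by simp [glen]
lemma glen_inv (x : BraidGroup n) : glen x⁻¹ = - glen x := by simp [glen]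
lemma glen_zpow (x : BraidGroup n) (k : ℤ) : glen (x ^ k) = k * glen x := by simp [glen]
lemma glen_σ (i : Fin (n - 1)) : glen (σ i) = 1 := by
  unfold glen glenHom σ
  rw [PresentedGroup.toGroup.of]; rfl

lemma glen_emb (a : BM (n - 1)) : glen (emb n a) = ml a := by
  induction a using BM_induction with
  | h1 => rw [map_one, glen_one]; rfl
  | h2 i x ih => rw [map_mul, glen_mul, ml_mul, ih, emb_gs, glen_σ, ml_gs]; push_cast; rfl

lemma pos_one : IsPositive (1 : BraidGroup n) := Submonoid.one_mem _
lemma pos_mul {x y : BraidGroup n} (hx : IsPositive x) (hy : IsPositive y) : IsPositive (x * y) :=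
  Submonoid.mul_mem _ hx hy
lemma pos_σ (i : Fin (n - 1)) : IsPositive (σ i) := Submonoid.subset_closure ⟨i, rfl⟩

lemma pos_glen {x : BraidGroup n} (h : IsPositive x) : 0 ≤ glen x := by
  obtain ⟨a, rfl⟩ := pos_iff.1 h
  rw [glen_emb]; omega

lemma pos_cases {x : BraidGroup n} (h : IsPositive x) :
    x = 1 ∨ ∃ i y, IsPositive y ∧ x = σ i * y := by
  obtain ⟨a, rfl⟩ := pos_iff.1 h
  induction a using BM_induction with
  | h1 => left; simp
  | h2 i x ih => right; exact ⟨i, emb n x, pos_iff.2 ⟨x, rfl⟩, by rw [map_mul, emb_gs]⟩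

lemma pos_eq_one {x : BraidGroup n} (h : IsPositive x) (hl : glen x ≤ 0) : x = 1 := by
  rcases pos_cases h with h | ⟨i, y, hy, rfl⟩
  · exact h
  · have := pos_glen hy
    rw [glen_mul, glen_σ] at hl
    omega

instance instPO : PartialOrder (BraidGroup n) where
  le a b := IsPositive (a⁻¹ * b)
  le_refl a := by
    show IsPositive (a⁻¹ * a)
    rw [inv_mul_cancel]; exact pos_one
  le_trans a b c h1 h2 := by
    have := pos_mul h1 h2
    show IsPositive (a⁻¹ * c)
    convert this using 1
    group
  le_antisymm a b h1 h2 := by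
    have h1' := pos_glen h1
    have h2' := pos_glen h2
    rw [glen_mul, glen_inv] at h1' h2'
    have := pos_eq_one h1 (by rw [glen_mul, glen_inv]; omega)
    rw [inv_mul_eq_one] at this
    exact this

lemma le_def {a b : BraidGroup n} : a ≤ b ↔ IsPositive (a⁻¹ * b) := Iff.rfl

lemma one_le_iff {a : BraidGroup n} : 1 ≤ a ↔ IsPositive a := by rw [le_def]; simp

lemma leftDvd_iff {a b : BraidGroup n} : LeftDvd a b ↔ a ≤ b := by
  constructor
  · rintro ⟨p, hp, rfl⟩
    rw [le_def]; simpa using hp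
  · intro h
    exact ⟨a⁻¹ * b, h, by group⟩

lemma mul_le_mul_left_iff' {a b : BraidGroup n} (g : BraidGroup n) : g * a ≤ g * b ↔ a ≤ b := by
  rw [le_def, le_def]
  have : (g * a)⁻¹ * (g * b) = a⁻¹ * b := by group
  rw [this]

lemma le_mul_pos (a : BraidGroup n) {b : BraidGroup n} (h : 1 ≤ b) : a ≤ a * b := by
  rw [le_def]; simpa using one_le_iff.1 h

lemma one_le_mul' {a b : BraidGroup n} (ha : 1 ≤ a) (hb : 1 ≤ b) : 1 ≤ a * b :=
  ha.trans (le_mul_pos a hb)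

lemma glen_mono {a b : BraidGroup n} (h : a ≤ b) : glen a ≤ glen b := by
  have := pos_glen (le_def.1 h)
  rw [glen_mul, glen_inv] at this
  omega

lemma eq_of_glen {a b : BraidGroup n} (h : a ≤ b) (hl : glen b ≤ glen a) : a = b := by
  have := pos_eq_one (le_def.1 h) (by rw [glen_mul, glen_inv]; omega)
  rwa [inv_mul_eq_one] at this

lemma one_le_σ (i : Fin (n - 1)) : 1 ≤ σ i := one_le_iff.2 (pos_σ i)

lemma not_σ_le_one (i : Fin (n - 1)) : ¬ σ i ≤ 1 := by
  intro h
  have := glen_mono h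
  rw [glen_σ, glen_one] at this
  omega

lemma exists_atom {a b : BraidGroup n} (h : a ≤ b) (hne : a ≠ b) : ∃ i, a * σ i ≤ b := by
  rcases pos_cases (le_def.1 h) with h' | ⟨i, y, hy, h'⟩
  · rw [inv_mul_eq_one] at h'; exact (hne h').elim
  · refine ⟨i, ?_⟩
    rw [le_def]
    have : (a * σ i)⁻¹ * b = y := by
      rw [mul_inv_rev, mul_assoc, h']; group
    rw [this]; exact hy

lemma σ_le_iff {i : Fin (n - 1)} {y : BraidGroup n} : σ i ≤ y ↔ ∃ A, y = emb n (gs i * A) := by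
  constructor
  · intro h
    obtain ⟨A, hA⟩ := pos_iff.1 (le_def.1 h)
    exact ⟨A, by rw [map_mul, hA, emb_gs]; group⟩
  · rintro ⟨A, rfl⟩
    rw [map_mul, emb_gs]
    exact le_mul_pos _ (one_le_iff.2 (pos_iff.2 ⟨A, rfl⟩))

lemma lcm_exists (i j : Fin (n - 1)) : ∃ L : BraidGroup n, σ i ≤ L ∧ σ j ≤ L ∧
    ∀ y, σ i ≤ y → σ j ≤ y → L ≤ y := by
  have emb_le : ∀ A Z : BM (n - 1), emb n A ≤ emb n (A * Z) := by
    intro A Z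
    rw [map_mul]
    exact le_mul_pos _ (one_le_iff.2 (pos_iff.2 ⟨Z, rfl⟩))
  rcases tricho i j with rfl | h | h
  · exact ⟨σ i, le_rfl, le_rfl, fun y h _ => h⟩
  · refine ⟨emb n (gs i * gs j), emb_le (gs i) _, ?_, ?_⟩
    · rw [gs_comm h]; exact emb_le (gs j) _
    · intro y h1 h2
      obtain ⟨A, rfl⟩ := σ_le_iff.1 h1
      obtain ⟨B, hB⟩ := σ_le_iff.1 h2
      obtain ⟨Z, rfl, -⟩ := (key (emb_inj hB)).cm h
      rw [← mul_assoc]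
      exact emb_le _ _
  · refine ⟨emb n (gs i * gs j * gs i), ?_, ?_, ?_⟩
    · rw [mul_assoc]; exact emb_le (gs i) _
    · rw [gs_braid h, mul_assoc]; exact emb_le (gs j) _
    · intro y h1 h2
      obtain ⟨A, rfl⟩ := σ_le_iff.1 h1
      obtain ⟨B, hB⟩ := σ_le_iff.1 h2
      obtain ⟨Z, rfl, -⟩ := (key (emb_inj hB)).ad h
      rw [← mul_assoc, ← mul_assoc]
      exact emb_le _ _

lemma Δ_pos : (1 : BraidGroup n) ≤ Δ n := one_le_iff.2 (pos_iff.2 ⟨_, emb_DM⟩)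

lemma σ_le_Δ (i : Fin (n - 1)) : σ i ≤ Δ n := by
  obtain ⟨R, hR⟩ := DM_dvd i
  exact σ_le_iff.2 ⟨R, by rw [← hR, emb_DM]⟩

lemma σ_Δ (i : Fin (n - 1)) : σ i * Δ n = Δ n * σ i.rev := by
  have := congrArg (emb n) (DM_conj i)
  rwa [map_mul, map_mul, emb_gs, emb_gs, emb_DM] at this

lemma group_induction {p : BraidGroup n → Prop} (h1 : p 1) (hσ : ∀ i, p (σ i))
    (hσ' : ∀ i, p (σ i)⁻¹) (hm : ∀ x y, p x → p y → p (x * y)) (x : BraidGroup n) : p x := by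
  induction x using PresentedGroup.induction_on with
  | _ z =>
    induction z using FreeGroup.induction_on with
    | C1 => simpa using h1
    | of i => exact hσ i
    | inv_of i _ => exact hσ' i
    | mul x y hx hy => rw [map_mul]; exact hm _ _ hx hy

lemma Δ_conj_involutive (x : BraidGroup n) : Δ n * (Δ n * x * (Δ n)⁻¹) * (Δ n)⁻¹ = x := by
  have hΔ : ∀ i : Fin (n - 1), Δ n * σ i * (Δ n)⁻¹ = σ i.rev := by
    intro i
    have := σ_Δ i.rev
    rw [Fin.rev_rev] at this
    rw [← this]; group
  have key : ∀ i : Fin (n - 1), Δ n * (Δ n * σ i * (Δ n)⁻¹) * (Δ n)⁻¹ = σ i := by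
    intro i; rw [hΔ, hΔ, Fin.rev_rev]
  induction x using group_induction with
  | h1 => group
  | hσ i => exact key i
  | hσ' i =>
    have h := key i
    have h2 : Δ n * (Δ n * (σ i)⁻¹ * (Δ n)⁻¹) * (Δ n)⁻¹
        = (Δ n * (Δ n * σ i * (Δ n)⁻¹) * (Δ n)⁻¹)⁻¹ := by
      simp only [mul_inv_rev, inv_inv, mul_assoc]
    rw [h2, h]
  | hm x y hx hy =>
    calc _ = (Δ n * (Δ n * x * (Δ n)⁻¹) * (Δ n)⁻¹) * (Δ n * (Δ n * y * (Δ n)⁻¹) * (Δ n)⁻¹) := by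
          group
      _ = _ := by rw [hx, hy]

lemma Δ_conj_σ (i : Fin (n - 1)) : Δ n * σ i * (Δ n)⁻¹ = σ i.rev := by
  have := σ_Δ i.rev
  rw [Fin.rev_rev] at this
  rw [← this]; group

lemma Δ_sq_central (x : BraidGroup n) : Δ n * Δ n * x = x * (Δ n * Δ n) := by
  have := Δ_conj_involutive x
  calc Δ n * Δ n * x = (Δ n * (Δ n * x * (Δ n)⁻¹) * (Δ n)⁻¹) * (Δ n * Δ n) := by group
    _ = _ := by rw [this]

lemma Δ_zpow_even_comm (x : BraidGroup n) (k : ℤ) : (Δ n) ^ (2 * k) * x = x * (Δ n) ^ (2 * k) := by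
  have : Commute ((Δ n) ^ (2 : ℤ)) x := by
    rw [zpow_ofNat, pow_two]
    exact Δ_sq_central x
  rw [zpow_mul]
  exact this.zpow_left k

lemma pos_conj {x : BraidGroup n} (h : IsPositive x) : IsPositive (Δ n * x * (Δ n)⁻¹) := by
  induction h using Submonoid.closure_induction with
  | mem x hx => obtain ⟨i, rfl⟩ := hx; rw [Δ_conj_σ]; exact pos_σ _
  | one => simpa using pos_one
  | mul x y _ _ hx hy =>
    have := pos_mul hx hy
    convert this using 1
    group

lemma pos_conj_inv {x : BraidGroup n} (h : IsPositive x) : IsPositive ((Δ n)⁻¹ * x * Δ n) := by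
  have h1 := pos_conj h
  have h2 := Δ_conj_involutive ((Δ n)⁻¹ * x * Δ n)
  have : Δ n * (Δ n * ((Δ n)⁻¹ * x * Δ n) * (Δ n)⁻¹) * (Δ n)⁻¹ = Δ n * x * (Δ n)⁻¹ := by group
  rw [this] at h2
  rw [← h2]; exact h1

lemma pos_conj_zpow (k : ℤ) : ∀ {x : BraidGroup n}, IsPositive x →
    IsPositive ((Δ n) ^ k * x * (Δ n) ^ (-k)) := by
  induction k using Int.induction_on with
  | zero => intro x h; simpa using h
  | succ k ih =>
    intro x h
    have := ih (pos_conj h)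
    convert this using 1
    simp only [zpow_add, zpow_neg, zpow_one, mul_inv_rev]
    group
  | pred k ih =>
    intro x h
    have := ih (pos_conj_inv h)
    convert this using 1
    group

lemma mul_Δ_mono {a b : BraidGroup n} (k : ℤ) (h : a ≤ b) : a * Δ n ^ k ≤ b * Δ n ^ k := by
  rw [le_def] at *
  have := pos_conj_zpow (-k) h
  convert this using 1
  group

lemma mul_Δ_le_iff {a b : BraidGroup n} (k : ℤ) : a * Δ n ^ k ≤ b * Δ n ^ k ↔ a ≤ b := by
  refine ⟨fun h => ?_, mul_Δ_mono k⟩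
  have := mul_Δ_mono (-k) h
  simpa [mul_assoc, ← zpow_add] using this

lemma exists_Δ_le (g : BraidGroup n) : ∃ k : ℕ, Δ n ^ (-(2 * (k : ℤ))) ≤ g := by
  have : ∃ k : ℕ, IsPositive (Δ n ^ (2 * (k : ℤ)) * g) := by
    induction g using group_induction with
    | h1 => exact ⟨0, by simpa using pos_one⟩
    | hσ i => exact ⟨0, by simpa using pos_σ i⟩
    | hσ' i =>
      refine ⟨1, ?_⟩
      have h1 := σ_le_Δ i
      rw [le_def] at h1
      have h2 := pos_mul h1 (one_le_iff.1 Δ_pos)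
      convert h2 using 1
      rw [Δ_zpow_even_comm, mul_assoc]
      congr 1
      rw [show (2 * ((1 : ℕ) : ℤ)) = 2 by norm_num, zpow_ofNat, pow_two]
    | hm x y hx hy =>
      obtain ⟨k, hk⟩ := hx
      obtain ⟨l, hl⟩ := hy
      refine ⟨k + l, ?_⟩
      have := pos_mul hk hl
      convert this using 1
      push_cast
      rw [mul_add, zpow_add, mul_assoc, ← mul_assoc _ x y, Δ_zpow_even_comm x l]
      simp only [mul_assoc]
  obtain ⟨k, hk⟩ := this
  refine ⟨k, ?_⟩
  rw [le_def, zpow_neg, inv_inv]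
  exact hk

lemma Δ_zpow_mono {k l : ℤ} (h : k ≤ l) : Δ n ^ k ≤ Δ n ^ l := by
  obtain ⟨d, rfl⟩ := Int.le.dest h
  rw [zpow_add]
  refine le_mul_pos _ ?_
  rw [zpow_natCast]
  exact one_le_iff.2 (Submonoid.pow_mem _ (one_le_iff.1 Δ_pos) d)

lemma exists_lower (a b : BraidGroup n) : ∃ e, e ≤ a ∧ e ≤ b := by
  obtain ⟨k, hk⟩ := exists_Δ_le a
  obtain ⟨l, hl⟩ := exists_Δ_le b
  refine ⟨Δ n ^ (-(2 * ((k + l : ℕ) : ℤ))), (Δ_zpow_mono ?_).trans hk, (Δ_zpow_mono ?_).trans hl⟩ <;>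
  · push_cast; omega

lemma meet_above (a b : BraidGroup n) : ∀ (N : ℕ) (e : BraidGroup n), e ≤ a → e ≤ b →
    glen a - glen e ≤ N →
    ∃ g, e ≤ g ∧ g ≤ a ∧ g ≤ b ∧ ∀ c, e ≤ c → c ≤ a → c ≤ b → c ≤ g := by
  intro N
  induction N with
  | zero =>
    intro e ha hb hl
    have : e = a := eq_of_glen ha (by push_cast at hl; omega)
    exact ⟨e, le_rfl, ha, hb, fun c _ h _ => this ▸ h⟩
  | succ N ih =>
    intro e ha hb hl
    have step : ∀ i, e * σ i ≤ a → e * σ i ≤ b → ∃ g, e * σ i ≤ g ∧ g ≤ a ∧ g ≤ b ∧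
        ∀ c, e * σ i ≤ c → c ≤ a → c ≤ b → c ≤ g := by
      intro i h1 h2
      refine ih _ h1 h2 ?_
      rw [glen_mul, glen_σ]; push_cast at hl; omega
    by_cases hex : ∃ i, e * σ i ≤ a ∧ e * σ i ≤ b
    · obtain ⟨i, h1, h2⟩ := hex
      obtain ⟨g, g1, g2, g3, g4⟩ := step i h1 h2
      refine ⟨g, (le_mul_pos e (one_le_σ i)).trans g1, g2, g3, ?_⟩
      intro c hc ca cb
      by_cases hec : e = c
      · rw [← hec]; exact (le_mul_pos e (one_le_σ i)).trans g1
      · obtain ⟨j, hj⟩ := exists_atom hc hec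
        obtain ⟨g', g1', g2', g3', g4'⟩ := step j (hj.trans ca) (hj.trans cb)
        obtain ⟨L, L1, L2, L3⟩ := lcm_exists i j
        have hL : ∀ y, e * σ i ≤ y → e * σ j ≤ y → e * L ≤ y := by
          intro y y1 y2
          have e1 : y = e * (e⁻¹ * y) := by group
          rw [e1, mul_le_mul_left_iff'] at y1 y2 ⊢
          exact L3 _ y1 y2
        have hLa := hL a h1 (hj.trans ca)
        have hLb := hL b h2 (hj.trans cb)
        have k1 : e * L ≤ g' := g4' _ ((mul_le_mul_left_iff' e).2 L2) hLa hLb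
        have k2 : e * σ i ≤ g' := ((mul_le_mul_left_iff' e).2 L1).trans k1
        exact (g4' c hj ca cb).trans (g4 g' k2 g2' g3')
    · refine ⟨e, le_rfl, ha, hb, ?_⟩
      intro c hc ca cb
      by_contra hne
      have hec : e ≠ c := fun h => hne (h ▸ le_rfl)
      obtain ⟨j, hj⟩ := exists_atom hc hec
      exact hex ⟨j, hj.trans ca, hj.trans cb⟩

lemma exists_meet (a b : BraidGroup n) :
    ∃ g, g ≤ a ∧ g ≤ b ∧ ∀ c, c ≤ a → c ≤ b → c ≤ g := by
  have meet : ∀ e, e ≤ a → e ≤ b →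
      ∃ g, e ≤ g ∧ g ≤ a ∧ g ≤ b ∧ ∀ c, e ≤ c → c ≤ a → c ≤ b → c ≤ g := by
    intro e h1 h2
    exact meet_above a b (glen a - glen e).toNat e h1 h2 (by omega)
  obtain ⟨e, ea, eb⟩ := exists_lower a b
  obtain ⟨g, g1, g2, g3, g4⟩ := meet e ea eb
  refine ⟨g, g2, g3, fun c ca cb => ?_⟩
  obtain ⟨e', h1, h2⟩ := exists_lower e c
  obtain ⟨g', g1', g2', g3', g4'⟩ := meet e' (h2.trans ca) (h2.trans cb)
  exact (g4' c h2 ca cb).trans (g4 g' (g4' e h1 ea eb) g2' g3')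

noncomputable instance instSI : SemilatticeInf (BraidGroup n) where
  toPartialOrder := instPO
  inf a b := (exists_meet a b).choose
  inf_le_left a b := (exists_meet a b).choose_spec.1
  inf_le_right a b := (exists_meet a b).choose_spec.2.1
  le_inf a b c h1 h2 := (exists_meet b c).choose_spec.2.2 a h1 h2

/-- The order automorphism `a ↦ g a Δ^k`. -/
noncomputable def op (g : BraidGroup n) (k : ℤ) : BraidGroup n ≃o BraidGroup n where
  toFun a := g * a * Δ n ^ k
  invFun a := g⁻¹ * a * Δ n ^ (-k)
  left_inv a := by group
  right_inv a := by group
  map_rel_iff' := by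
    intro a b
    show g * a * Δ n ^ k ≤ g * b * Δ n ^ k ↔ a ≤ b
    rw [mul_Δ_le_iff, mul_le_mul_left_iff']

lemma op_apply (g : BraidGroup n) (k : ℤ) (a : BraidGroup n) : op g k a = g * a * Δ n ^ k := rfl

lemma mul_inf' (g a b : BraidGroup n) : g * (a ⊓ b) = g * a ⊓ g * b := by
  have := (op g 0).map_inf a b
  simp only [op_apply, zpow_zero, mul_one] at this
  exact this

lemma inf_mul_Δ (a b : BraidGroup n) (k : ℤ) : (a ⊓ b) * Δ n ^ k = a * Δ n ^ k ⊓ b * Δ n ^ k := by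
  have := (op 1 k).map_inf a b
  simp only [op_apply, one_mul] at this
  exact this

lemma τ_spec (n : ℕ) : ∀ i : Fin (n - 1), τ n (σ i) = σ i.rev := by
  have : ∃ f : BraidGroup n →* BraidGroup n, ∀ i : Fin (n - 1), f (σ i) = σ i.rev :=
    ⟨(MulAut.conj (Δ n)).toMonoidHom, fun i => by simp [Δ_conj_σ]⟩
  exact Classical.epsilon_spec this

lemma τ_eq (x : BraidGroup n) : τ n x = Δ n * x * (Δ n)⁻¹ := by
  have : τ n = (MulAut.conj (Δ n)).toMonoidHom := by
    apply PresentedGroup.ext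
    intro i
    have := τ_spec n i
    simp only [MulEquiv.toMonoidHom_eq_coe, MonoidHom.coe_coe, MulAut.conj_apply]
    exact this.trans (Δ_conj_σ i).symm
  rw [this]; simp

lemma τpow_eq (u : ℤ) (x : BraidGroup n) : τpow u x = Δ n ^ u * x * Δ n ^ (-u) := by
  unfold τpow
  split
  · rename_i h
    obtain ⟨k, rfl⟩ := h
    rw [← two_mul, Δ_zpow_even_comm]; group
  · rename_i h
    rw [Int.not_even_iff_odd] at h
    obtain ⟨k, rfl⟩ := h
    rw [τ_eq, zpow_neg, zpow_add, mul_inv_rev, mul_assoc (Δ n ^ (2 * k)), Δ_zpow_even_comm]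
    simp only [zpow_one]
    group

end BraidAux

namespace BraidAux

section abstract

set_option linter.unusedSectionVars false

variable {α : Type*} [SemilatticeInf α]

/-- Basic setting: two commuting order automorphisms. -/
structure Setup (P Q : α ≃o α) : Prop where
  comm : ∀ a, P (Q a) = Q (P a)

/-- The meet operator. -/
def FF (P Q : α ≃o α) (a : α) : α := P a ⊓ Q a

lemma FF_mono (P Q : α ≃o α) : Monotone (FF P Q) := fun _ _ h =>
  inf_le_inf (P.monotone h) (Q.monotone h)

lemma FF_comm {P Q R : α ≃o α} (hP : ∀ a, R (P a) = P (R a)) (hQ : ∀ a, R (Q a) = Q (R a)) (a : α) :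
    R (FF P Q a) = FF P Q (R a) := by
  unfold FF; rw [map_inf, hP, hQ]

lemma iter_comm {f g : α → α} (h : ∀ a, f (g a) = g (f a)) (k : ℕ) (a : α) :
    f (g^[k] a) = g^[k] (f a) :=
  (show Function.Commute f g from h).iterate_right k a

lemma iter_mono {f : α → α} (h : Monotone f) (k : ℕ) : Monotone f^[k] := h.iterate k

lemma len_iter {f : α → α} {len : α → ℤ} {p : ℤ} (h : ∀ a, len (f a) = len a + p) (k : ℕ) (a : α) :
    len (f^[k] a) = len a + k * p := by
  induction k with
  | zero => simp
  | succ k ih => rw [Function.iterate_succ_apply', h, ih]; push_cast; ring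

lemma len_iter_le {f : α → α} {len : α → ℤ} {p : ℤ} (h : ∀ a, len (f a) ≤ len a + p) (k : ℕ) (a : α) :
    len (f^[k] a) ≤ len a + k * p := by
  induction k with
  | zero => simp
  | succ k ih =>
    rw [Function.iterate_succ_apply']
    have := h (f^[k] a)
    push_cast; linarith

lemma int_le_of_mul {c d K : ℤ} (h : ∀ j : ℕ, (j : ℤ) * c ≤ j * d + K) : c ≤ d := by
  by_contra hcd
  push Not at hcd
  have := h (K.toNat + 1)
  have h3 : K ≤ K.toNat := Int.self_le_toNat K
  push_cast at this
  nlinarith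

lemma iter_mul_of {f r : α → α} {a : α} (hfr : ∀ a, r (f a) = f (r a)) {M : ℕ} (h : f^[M] a = r a)
    (j : ℕ) : f^[M * j] a = r^[j] a := by
  induction j with
  | zero => simp
  | succ j ih =>
    rw [Nat.mul_succ, Nat.add_comm, Function.iterate_add_apply, ih, Function.iterate_succ_apply']
    exact ((show Function.Commute r f from hfr).iterate_iterate j M a).symm.trans
      (by rw [h, ← Function.iterate_succ_apply, Function.iterate_succ_apply'])

lemma iter_inf (D : α ≃o α) (m : ℕ) (a b : α) : D^[m] (a ⊓ b) = D^[m] a ⊓ D^[m] b := by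
  induction m with
  | zero => rfl
  | succ m ihm => simp only [Function.iterate_succ_apply', ihm, map_inf]

lemma recur {P Q R : α ≃o α} (hPQ : ∀ a, P (Q a) = Q (P a))
    (hRP : ∀ a, R (P a) = P (R a)) (hRQ : ∀ a, R (Q a) = Q (R a))
    {len : α → ℤ} (hm : ∀ {a b}, a ≤ b → len a ≤ len b)
    (he : ∀ {a b}, a ≤ b → len b ≤ len a → a = b)
    {q r : ℤ} (hq : ∀ a, len (Q a) = len a + q) (hr : ∀ a, len (R a) = len a + r)
    {M : ℕ} (hM : 0 < M) {a β : α} (ha : (FF P Q)^[M] a = R a) (hβ : β ≤ a) (hβ' : Q β ≤ P β) :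
    Q a ≤ P a := by
  have h1 : ∀ N, (FF P Q)^[N] β = Q^[N] β := by
    intro N
    induction N with
    | zero => rfl
    | succ N ih =>
      rw [Function.iterate_succ_apply', ih, Function.iterate_succ_apply']
      unfold FF
      refine inf_eq_right.2 ?_
      rw [iter_comm hPQ, ← Function.iterate_succ_apply' Q, Function.iterate_succ_apply]
      exact Q.monotone.iterate N hβ'
  have hle : ∀ c, len (FF P Q c) ≤ len c + q := fun c => (hm inf_le_right).trans (hq c).le
  have h2 : (M : ℤ) * q ≤ r := by
    apply int_le_of_mul (K := len a - len β)
    intro j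
    have h3 := hm (iter_mono (FF_mono P Q) (M * j) hβ)
    rw [h1, iter_mul_of (r := R) (fun a => FF_comm hRP hRQ a) ha, len_iter hq, len_iter hr] at h3
    push_cast at h3
    linarith
  obtain ⟨M', rfl⟩ := Nat.exists_eq_succ_of_ne_zero hM.ne'
  have h4 : len (FF P Q a) = len a + q := by
    refine le_antisymm (hle a) ?_
    have h5 := len_iter_le hle M' (FF P Q a)
    rw [← Function.iterate_succ_apply, ha, hr] at h5
    push_cast at h2
    linarith
  have h6 : FF P Q a = Q a := he inf_le_right (by rw [h4, hq])
  rw [← h6]; exact inf_le_left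

lemma D_iter_le {D : α ≃o α} (hD : ∀ c, c ≤ D c) (k : ℕ) (c : α) : c ≤ D^[k] c := by
  induction k with
  | zero => exact le_rfl
  | succ k ih => rw [Function.iterate_succ_apply']; exact ih.trans (hD _)

lemma FF_iter_ge {X D : α ≃o α} (hXD : ∀ a, X (D a) = D (X a)) (hD : ∀ c, c ≤ D c) {a : α}
    (ha : a ≤ X a) (j : ℕ) : X a ⊓ D^[j] a ≤ (FF X D)^[j] a := by
  induction j with
  | zero => exact inf_le_right
  | succ j ih =>
    rw [Function.iterate_succ_apply', Function.iterate_succ_apply']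
    refine le_trans ?_ (FF_mono X D ih)
    refine le_inf ?_ ?_
    · refine inf_le_left.trans (X.monotone (le_inf ha (D_iter_le hD j a)))
    · rw [map_inf]
      exact inf_le_inf (hD _) le_rfl

lemma FF_iter_le {X D : α ≃o α} (j : ℕ) (a : α) : (FF X D)^[j] a ≤ D^[j] a := by
  induction j with
  | zero => exact le_rfl
  | succ j ih =>
    rw [Function.iterate_succ_apply', Function.iterate_succ_apply']
    exact inf_le_right.trans (D.monotone ih)

lemma FF_iter_le' {X D : α ≃o α} (j : ℕ) (a : α) : (FF X D)^[j] a ≤ X^[j] a := by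
  induction j with
  | zero => exact le_rfl
  | succ j ih =>
    rw [Function.iterate_succ_apply', Function.iterate_succ_apply']
    exact inf_le_left.trans (X.monotone ih)

lemma lemC {X D R : α ≃o α} (hXD : ∀ a, X (D a) = D (X a))
    (hRX : ∀ a, R (X a) = X (R a)) (hRD : ∀ a, R (D a) = D (R a))
    {len : α → ℤ} (hm : ∀ {a b}, a ≤ b → len a ≤ len b)
    (he : ∀ {a b}, a ≤ b → len b ≤ len a → a = b)
    {p r : ℤ} (hp : ∀ a, len (X a) = len a + p) (hr : ∀ a, len (R a) = len a + r)
    (hD : ∀ c, c ≤ D c) {l M : ℕ} (hM : 0 < M) {a b : α} (ha1 : a ≤ X a) (ha2 : X a ≤ D^[l] a)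
    (ha : (FF X D)^[M] a = R a) (hab : a ≤ b) (hb : (FF X D)^[l] b = X b) :
    (FF X D)^[l] a = X a := by
  set G := (FF X D)^[l] with hG
  have Gm : Monotone G := iter_mono (FF_mono X D) l
  have h1 : X a ≤ G a := by
    have := FF_iter_ge hXD hD ha1 l
    rwa [inf_eq_left.2 ha2] at this
  have hXF : ∀ c, X (FF X D c) = FF X D (X c) := fun c => FF_comm (fun _ => rfl) hXD c
  have hRF : ∀ c, R (FF X D c) = FF X D (R c) := fun c => FF_comm hRX hRD c
  have hXG : ∀ c, X (G c) = G (X c) := fun c => iter_comm hXF l c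
  have h2 : ∀ K, X^[K] (G a) ≤ G^[K + 1] a := by
    intro K
    induction K with
    | zero => exact le_rfl
    | succ K ih =>
      rw [Function.iterate_succ_apply']
      refine (X.monotone ih).trans ?_
      rw [iter_comm hXG, Function.iterate_succ_apply]
      exact iter_mono Gm (K + 1) h1
  have hGM : G^[M] a = R^[l] a := by
    rw [hG, ← Function.iterate_mul, Nat.mul_comm, iter_mul_of (r := R) hRF ha]
  have hGMj : ∀ j, G^[M * j] a = R^[l * j] a := by
    intro j
    rw [hG, ← Function.iterate_mul, show l * (M * j) = M * (l * j) by ring,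
      iter_mul_of (r := R) hRF ha]
  have hGb : ∀ N, G^[N] b = X^[N] b := by
    intro N
    have := iter_mul_of (r := X) hXF hb N
    rw [← this, hG, ← Function.iterate_mul]
  have h3 : (l : ℤ) * r ≤ M * p := by
    apply int_le_of_mul (K := len b - len a)
    intro j
    have h4 := hm (iter_mono Gm (M * j) hab)
    rw [hGb, hGMj, len_iter hr, len_iter hp] at h4
    push_cast at h4
    linarith
  obtain ⟨M', rfl⟩ := Nat.exists_eq_succ_of_ne_zero hM.ne'
  have h5 := hm (h2 M')
  rw [hGM, len_iter hp, len_iter hr] at h5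
  refine (he h1 ?_).symm
  rw [hp]
  push_cast at h3
  linarith

lemma lemD {X D : α ≃o α} (hXD : ∀ a, X (D a) = D (X a)) (hD : ∀ c, c ≤ D c) {l : ℕ} (hl : 2 ≤ l)
    {a : α} (ha : a ≤ X a) (h : (FF X D)^[l] a = X a) :
    D (X a ⊓ D^[l - 1] a) ⊓ X (FF X D a) ≤ X a := by
  obtain ⟨k, rfl⟩ := Nat.exists_eq_add_of_le' hl
  have hinc : ∀ j, (FF X D)^[j] a ≤ X ((FF X D)^[j] a) := by
    intro j
    rw [iter_comm (fun c => FF_comm (fun _ => rfl) hXD c)]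
    exact iter_mono (FF_mono X D) j ha
  have hinc2 : ∀ j, (FF X D)^[j] a ≤ (FF X D)^[j + 1] a := by
    intro j
    rw [Function.iterate_succ_apply']
    exact le_inf (hinc j) (hD _)
  have hmono : Monotone (fun j => (FF X D)^[j] a) := monotone_nat_of_le_succ hinc2
  have hle : (FF X D)^[k + 1] a ≤ X a := by
    rw [← h]; exact hinc2 (k + 1)
  have hq : (FF X D)^[k + 1] a = X a ⊓ D^[k + 1] a :=
    le_antisymm (le_inf hle (FF_iter_le _ _)) (FF_iter_ge hXD hD ha _)
  have e : k + 2 - 1 = k + 1 := rfl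
  rw [e, ← hq, ← h, Function.iterate_succ_apply' _ (k + 1)]
  refine le_inf ?_ inf_le_left
  refine inf_le_right.trans (X.monotone ?_)
  exact hmono (show 1 ≤ k + 1 by omega)

lemma lemE_aux {X D : α ≃o α} (hXD : ∀ a, X (D a) = D (X a)) {l : ℕ} {b : α} (hb : b ≤ X b)
    (h : X (X b) ⊓ D^[l] b ≤ X b) (j : ℕ) : X^[j + 1] b ⊓ D^[l] b ≤ X b := by
  induction j with
  | zero => exact inf_le_left
  | succ j ih =>
    have h1 : X^[j + 1 + 1] b ⊓ D^[l] b ≤ X (X^[j + 1] b ⊓ D^[l] b) := by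
      rw [map_inf, ← Function.iterate_succ_apply' X]
      refine inf_le_inf le_rfl ?_
      rw [iter_comm hXD]
      exact D.monotone.iterate l hb
    exact (le_inf (h1.trans (X.monotone ih)) inf_le_right).trans h

lemma lemE {X D : α ≃o α} (hXD : ∀ a, X (D a) = D (X a)) (hD : ∀ c, c ≤ D c) {l : ℕ} (hl : 1 ≤ l)
    {b : α} (hb : b ≤ X b) (hb2 : X b ≤ D^[l] b)
    (h : X (X b) ⊓ D^[l] b ≤ X b) : (FF X D)^[l] b = X b := by
  apply le_antisymm
  · obtain ⟨k, rfl⟩ := Nat.exists_eq_add_of_le' hl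
    exact (le_inf (FF_iter_le' _ _) (FF_iter_le _ _)).trans (lemE_aux hXD hb h k)
  · have := FF_iter_ge hXD hD hb l
    rwa [inf_eq_left.2 hb2] at this

lemma lemS {X D : α ≃o α} (hXD : ∀ a, X (D a) = D (X a)) (hD : ∀ c, c ≤ D c) {l : ℕ} (hl : 1 ≤ l)
    {b : α} (hb : b ≤ X b) (hb2 : X b ≤ D^[l] b)
    (h : X (X b) ⊓ D^[l] b ≤ X b) {β : α} {s : ℕ} (hβ : b ≤ β) (hβs : β ≤ D^[s] b)
    (hX : X β ≤ D^[l - 1] β) : X b ≤ D^[l - 1] b := by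
  have hXDk : ∀ k a, X (D^[k] a) = D^[k] (X a) := fun k a => iter_comm hXD k a
  have hXkD : ∀ k m a, X^[k] (D^[m] a) = D^[m] (X^[k] a) := fun k m a =>
    (show Function.Commute X D from hXD).iterate_iterate k m a
  have hXm : ∀ j, X^[j] b ≤ X^[j + 1] b := fun j => by
    rw [Function.iterate_succ_apply]; exact X.monotone.iterate j hb
  have hXl : ∀ j, X^[j] b ≤ D^[j * l] b := by
    intro j
    induction j with
    | zero => simp
    | succ j ih =>
      rw [Function.iterate_succ_apply', Nat.succ_mul, Function.iterate_add_apply]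
      refine (X.monotone ih).trans ?_
      rw [hXDk]
      exact D.monotone.iterate _ hb2
  -- X^{k+1} b ⊓ D^{k l} b ≤ X^k b
  have hS : ∀ k, X^[k + 1] b ⊓ D^[k * l] b ≤ X^[k] b := by
    intro k
    induction k with
    | zero => simp
    | succ k ih =>
      have hXsymm : ∀ c, X.symm (D c) = D (X.symm c) := fun c => by
        apply X.injective; rw [hXD]; simp
      set Z := X^[k + 2] b ⊓ D^[(k + 1) * l] b with hZ
      have h1 : Z ≤ D^[k * l] (X^[k + 2] b ⊓ D^[l] b) := by
        have : D^[k * l] (X^[k + 2] b ⊓ D^[l] b) = D^[k * l] (X^[k + 2] b) ⊓ D^[k * l] (D^[l] b) := iter_inf _ _ _ _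
        rw [this]
        refine inf_le_inf (D_iter_le hD _ _) ?_
        rw [← Function.iterate_add_apply, Nat.succ_mul]
      have h2 : Z ≤ X (D^[k * l] b) := by
        rw [hXDk]
        exact h1.trans (D.monotone.iterate _ (lemE_aux hXD hb h (k + 1)))
      have h3 : Z ≤ X (X^[k + 1] b ⊓ D^[k * l] b) := by
        rw [map_inf]
        refine le_inf ?_ h2
        rw [← Function.iterate_succ_apply' X]
        exact inf_le_left
      rw [Function.iterate_succ_apply']
      exact h3.trans (X.monotone ih)
  -- iterates of `hX`
  have hXβ : ∀ j, X^[j] β ≤ D^[j * (l - 1)] β := by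
    intro j
    induction j with
    | zero => simp
    | succ j ih =>
      rw [Function.iterate_succ_apply', Nat.succ_mul, Function.iterate_add_apply]
      refine (X.monotone ih).trans ?_
      rw [hXDk]
      exact D.monotone.iterate _ hX
  have hK : X^[s + 1] b ≤ D^[(s + 1) * l - 1] b := by
    refine (X.monotone.iterate (s + 1) hβ).trans ((hXβ (s + 1)).trans ?_)
    refine (D.monotone.iterate _ hβs).trans ?_
    rw [← Function.iterate_add_apply]
    have : (s + 1) * (l - 1) + s = (s + 1) * l - 1 := by
      obtain ⟨k, rfl⟩ := Nat.exists_eq_add_of_le' hl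
      have : (s + 1) * (k + 1) = (s + 1) * k + s + 1 := by ring
      rw [this]; rfl
    rw [this]
  have hfin : X^[s] (X b) ≤ X^[s] (D^[l - 1] b) := by
    rw [← Function.iterate_succ_apply, hXkD]
    -- apply the shifted version of hS
    have e : D^[l - 1] (X^[s + 1] b ⊓ D^[s * l] b) = D^[l - 1] (X^[s + 1] b) ⊓ D^[l - 1] (D^[s * l] b) := iter_inf _ _ _ _
    have h5 := D.monotone.iterate (l - 1) (hS s)
    rw [e] at h5
    refine (le_inf (D_iter_le hD _ _) ?_).trans h5
    rw [← Function.iterate_add_apply]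
    have : l - 1 + s * l = (s + 1) * l - 1 := by rw [Nat.succ_mul]; omega
    rw [this]; exact hK
  have hrefl : ∀ k, ∀ c d, X^[k] c ≤ X^[k] d → c ≤ d := by
    intro k
    induction k with
    | zero => exact fun _ _ h => h
    | succ k ih =>
      intro c d hcd
      rw [Function.iterate_succ_apply', Function.iterate_succ_apply', X.le_iff_le] at hcd
      exact ih _ _ hcd
  exact hrefl s _ _ hfin

end abstract

end BraidAux

namespace BraidAux

variable {n : ℕ}

lemma lw_def {a b : BraidGroup n} : IsLeftWeighted a b ↔
    ∀ i : Fin (n - 1), ¬ (σ i ≤ a⁻¹ * Δ n ∧ σ i ≤ b) := by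
  unfold IsLeftWeighted
  simp only [leftDvd_iff]

lemma le_inv_mul_iff' {a b c : BraidGroup n} : c ≤ a⁻¹ * b ↔ a * c ≤ b := by
  rw [← mul_le_mul_left_iff' a]; simp

lemma lw_iff {a b : BraidGroup n} (ha : a ≤ Δ n) (hb : 1 ≤ b) :
    IsLeftWeighted a b ↔ a * b ⊓ Δ n ≤ a := by
  rw [lw_def]
  constructor
  · intro h
    by_contra hne
    have h1 : a ≤ a * b ⊓ Δ n := le_inf (le_mul_pos a hb) ha
    obtain ⟨i, hi⟩ := exists_atom h1 (fun h2 => hne h2.ge)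
    refine h i ⟨le_inv_mul_iff'.2 (hi.trans inf_le_right), ?_⟩
    exact (mul_le_mul_left_iff' a).1 (hi.trans inf_le_left)
  · rintro h i ⟨h1, h2⟩
    rw [le_inv_mul_iff'] at h1
    have h3 := (le_inf ((mul_le_mul_left_iff' a).2 h2) h1).trans h
    apply not_σ_le_one i
    rw [← mul_le_mul_left_iff' a, mul_one]; exact h3

lemma Δ_le_mul {g : BraidGroup n} (hg : 1 ≤ g) : Δ n ≤ g * Δ n := by
  have := mul_Δ_mono 1 hg
  simpa using this

lemma Δpow_le_mul {g : BraidGroup n} (hg : 1 ≤ g) (k : ℤ) : Δ n ^ k ≤ g * Δ n ^ k := by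
  have := mul_Δ_mono k hg
  simpa using this

lemma inf_Δ_mul {g : BraidGroup n} (hg : 1 ≤ g) (c : BraidGroup n) :
    g * c ⊓ Δ n = g * (c ⊓ Δ n) ⊓ Δ n := by
  rw [mul_inf', inf_assoc, inf_eq_right.2 (Δ_le_mul hg)]

lemma prod_pos {L : List (BraidGroup n)} (h : ∀ a ∈ L, 1 ≤ a ∧ a ≤ Δ n) : 1 ≤ L.prod := by
  induction L with
  | nil => exact le_rfl
  | cons a L ih =>
    rw [List.prod_cons]
    exact one_le_mul' (h a (by simp)).1 (ih fun b hb => h b (by simp [hb]))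

lemma prod_le {L : List (BraidGroup n)} (h : ∀ a ∈ L, 1 ≤ a ∧ a ≤ Δ n) :
    L.prod ≤ Δ n ^ (L.length : ℤ) := by
  induction L with
  | nil => simp
  | cons a L ih =>
    rw [List.prod_cons, List.length_cons]
    refine ((mul_le_mul_left_iff' a).2 (ih fun b hb => h b (by simp [hb]))).trans ?_
    have := mul_Δ_mono (L.length : ℤ) (h a (by simp)).2
    refine this.trans (le_of_eq ?_)
    push_cast
    rw [add_comm, zpow_add, zpow_one]

lemma head_lem (b : BraidGroup n) (hb : 1 ≤ b) : ∀ (L : List (BraidGroup n)) (a : BraidGroup n),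
    (∀ c ∈ a :: L, 1 ≤ c ∧ c ≤ Δ n) → List.IsChain IsLeftWeighted (a :: (L ++ [b])) →
    (a :: L).prod * b ⊓ Δ n = a := by
  intro L
  induction L with
  | nil =>
    intro a h hc
    have h1 := (h a (by simp))
    simp only [List.nil_append, List.isChain_cons_cons] at hc
    simp only [List.prod_cons, List.prod_nil, mul_one]
    exact le_antisymm ((lw_iff h1.2 hb).1 hc.1) (le_inf (le_mul_pos a hb) h1.2)
  | cons c L ih =>
    intro a h hc
    have h1 := (h a (by simp))
    simp only [List.cons_append, List.isChain_cons_cons] at hc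
    rw [List.prod_cons, mul_assoc, inf_Δ_mul h1.1, ih c (fun d hd => h d (by simp at hd ⊢; tauto))
      (by rw [List.isChain_cons]; have := hc.2; rw [List.isChain_cons] at this; exact this)]
    have hc1 := (h c (by simp))
    exact le_antisymm ((lw_iff h1.2 hc1.1).1 hc.1) (le_inf (le_mul_pos a hc1.1) h1.2)

lemma le_inf_mul (Z : BraidGroup n) (k : ℕ) (hZ : Z ≤ Δ n ^ ((k : ℤ) + 1)) :
    Z ≤ (Z ⊓ Δ n) * Δ n ^ (k : ℤ) := by
  rw [inf_mul_Δ]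
  refine le_inf (le_mul_pos Z ?_) ?_
  · have := Δ_zpow_mono (n := n) (show (0 : ℤ) ≤ k by omega)
    simpa using this
  · rw [add_comm, zpow_add, zpow_one] at hZ; exact hZ

lemma prefix_lem (b : BraidGroup n) (hb : 1 ≤ b) : ∀ (L : List (BraidGroup n)),
    (∀ c ∈ L, 1 ≤ c ∧ c ≤ Δ n) → List.IsChain IsLeftWeighted (L ++ [b]) →
    L.prod * b ⊓ Δ n ^ (L.length : ℤ) ≤ L.prod := by
  intro L
  induction L with
  | nil => intro _ _; simp
  | cons a L ih =>
    intro h hc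
    have hh := head_lem b hb L a h hc
    set Z := (a :: L).prod * b ⊓ Δ n ^ (((a :: L).length : ℕ) : ℤ) with hZ
    have h1 : Z ≤ (Z ⊓ Δ n) * Δ n ^ (L.length : ℤ) := by
      apply le_inf_mul
      refine inf_le_right.trans (le_of_eq ?_)
      rw [List.length_cons]; push_cast; rfl
    have h2 : Z ⊓ Δ n ≤ a := (inf_le_inf_right _ inf_le_left).trans hh.le
    have h3 : Z ≤ a * (Δ n ^ (L.length : ℤ)) := h1.trans (mul_Δ_mono _ h2)
    have h4 : Z ≤ a * (L.prod * b) := by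
      refine inf_le_left.trans (le_of_eq ?_)
      rw [List.prod_cons, mul_assoc]
    have h5 : Z ≤ a * (L.prod * b ⊓ Δ n ^ (L.length : ℤ)) := by
      rw [mul_inf']; exact le_inf h4 h3
    refine h5.trans ?_
    rw [List.prod_cons, mul_le_mul_left_iff']
    refine ih (fun d hd => h d (by simp [hd])) ?_
    rw [List.cons_append, List.isChain_cons] at hc
    exact hc.2

lemma lw_one (a : BraidGroup n) : IsLeftWeighted a 1 := by
  rw [lw_def]; exact fun i h => not_σ_le_one i h.2

lemma chain_one {L : List (BraidGroup n)} (h : List.IsChain IsLeftWeighted L) :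
    List.IsChain IsLeftWeighted (L ++ [1]) := by
  rw [List.isChain_append]
  refine ⟨h, by simp, ?_⟩
  intro a _ b hb
  simp at hb
  rw [← hb]; exact lw_one a

/-- A usable reformulation of `IsWeightedForm`. -/
lemma wform_iff {u : ℤ} {L : List (BraidGroup n)} {x : BraidGroup n} : IsWeightedForm u L x ↔
    (∀ a ∈ L, (1 ≤ a ∧ a ≤ Δ n) ∧ a ≠ 1 ∧ a ≠ Δ n) ∧ List.IsChain IsLeftWeighted L ∧
    x = Δ n ^ u * L.prod := by
  unfold IsWeightedForm IsPermBraid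
  simp only [leftDvd_iff, ← one_le_iff]
  rfl

lemma head_eq {L : List (BraidGroup n)} (h : ∀ c ∈ L, 1 ≤ c ∧ c ≤ Δ n)
    (hc : List.IsChain IsLeftWeighted L) : L.prod ⊓ Δ n = L.head?.getD 1 := by
  cases L with
  | nil => simpa using Δ_pos
  | cons a L =>
    have := head_lem 1 le_rfl L a h (chain_one hc)
    simpa using this

lemma wf_exists_pos : ∀ (N : ℕ) (p : BraidGroup n), 1 ≤ p → glen p ≤ N →
    ∃ (v : ℕ) (L : List (BraidGroup n)), IsWeightedForm (v : ℤ) L p := by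
  intro N
  induction N with
  | zero =>
    intro p hp hN
    have : 1 = p := eq_of_glen hp (by rw [glen_one]; exact_mod_cast hN)
    exact ⟨0, [], wform_iff.2 ⟨by simp, by simp, by simp [← this]⟩⟩
  | succ N ih =>
    intro p hp hN
    by_cases hp1 : 1 = p
    · exact ⟨0, [], wform_iff.2 ⟨by simp, by simp, by simp [← hp1]⟩⟩
    obtain ⟨i, hi⟩ := exists_atom hp hp1
    rw [one_mul] at hi
    set a := p ⊓ Δ n with ha
    have hia : σ i ≤ a := le_inf hi (σ_le_Δ i)
    have hga := glen_mono hia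
    rw [glen_σ] at hga
    have hap : a ≤ p := inf_le_left
    have h1a : 1 ≤ a := le_inf hp Δ_pos
    have hane : a ≠ 1 := by
      intro h; rw [h, glen_one] at hga; omega
    obtain ⟨v, L, hw⟩ := ih (a⁻¹ * p) (one_le_iff.2 (le_def.1 hap)) (by
      rw [glen_mul, glen_inv]; push_cast at hN; omega)
    rw [wform_iff] at hw
    obtain ⟨h1, h2, h3⟩ := hw
    by_cases haΔ : a = Δ n
    · refine ⟨v + 1, L, wform_iff.2 ⟨h1, h2, ?_⟩⟩
      push_cast
      rw [add_comm, zpow_add, zpow_one, mul_assoc, ← h3, haΔ]; simp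
    · have hv : v = 0 := by
        by_contra hv
        apply haΔ
        refine le_antisymm inf_le_right ?_
        refine le_inf ?_ le_rfl
        have h4 : Δ n ≤ a⁻¹ * p := by
          rw [h3]
          refine le_trans ?_ (le_mul_pos _ (prod_pos fun c hc => (h1 c hc).1))
          have := Δ_zpow_mono (n := n) (show (1 : ℤ) ≤ v by omega)
          simpa using this
        rw [le_inv_mul_iff'] at h4
        exact (Δ_le_mul h1a).trans h4
      subst hv
      rw [Nat.cast_zero, zpow_zero, one_mul] at h3
      have hpe : p = a * L.prod := by rw [← h3]; simp
      refine ⟨0, a :: L, wform_iff.2 ⟨?_, ?_, ?_⟩⟩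
      · intro c hc
        rcases List.mem_cons.1 hc with rfl | hc
        · exact ⟨⟨h1a, inf_le_right⟩, hane, haΔ⟩
        · exact h1 c hc
      · cases L with
        | nil => simp
        | cons c L =>
          rw [List.isChain_cons_cons]
          refine ⟨?_, h2⟩
          have hc1 := (h1 c (by simp)).1
          rw [lw_iff inf_le_right hc1.1]
          have hcp : a * c ≤ p := by
            conv_rhs => rw [hpe]
            rw [List.prod_cons, mul_le_mul_left_iff']
            exact le_mul_pos c (prod_pos fun d hd => (h1 d (by simp [hd])).1)
          exact inf_le_inf_right _ hcp
      · rw [List.prod_cons, ← hpe]; simp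

lemma wf_exists (z : BraidGroup n) : ∃ p : ℤ × List (BraidGroup n), IsWeightedForm p.1 p.2 z := by
  obtain ⟨k, hk⟩ := exists_Δ_le z
  have h1 : 1 ≤ (Δ n ^ (-(2 * (k : ℤ))))⁻¹ * z := one_le_iff.2 (le_def.1 hk)
  obtain ⟨v, L, hw⟩ := wf_exists_pos _ _ h1 (Int.self_le_toNat _)
  rw [wform_iff] at hw
  obtain ⟨h1, h2, h3⟩ := hw
  refine ⟨(-(2 * (k : ℤ)) + v, L), wform_iff.2 ⟨h1, h2, ?_⟩⟩
  simp only
  rw [zpow_add, mul_assoc, ← h3]; simp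

/-- All the data of the weighted form of `z`. -/
lemma wf_spec (z : BraidGroup n) :
    (∀ a ∈ (wf z).2, (1 ≤ a ∧ a ≤ Δ n) ∧ a ≠ 1 ∧ a ≠ Δ n) ∧ List.IsChain IsLeftWeighted (wf z).2 ∧
    z = Δ n ^ (binf z) * (wf z).2.prod :=
  wform_iff.1 (Classical.epsilon_spec (wf_exists z))

lemma binf_le (z : BraidGroup n) : Δ n ^ binf z ≤ z := by
  obtain ⟨h1, h2, h3⟩ := wf_spec z
  conv_rhs => rw [h3]
  exact le_mul_pos _ (prod_pos fun c hc => (h1 c hc).1)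

lemma le_bsup (z : BraidGroup n) : z ≤ Δ n ^ bsup z := by
  obtain ⟨h1, h2, h3⟩ := wf_spec z
  conv_lhs => rw [h3]
  unfold bsup blen
  rw [zpow_add, mul_le_mul_left_iff']
  exact prod_le fun c hc => (h1 c hc).1

lemma le_binf (hΔ : 0 < glen (Δ n)) {z : BraidGroup n} {m : ℤ} (h : Δ n ^ m ≤ z) : m ≤ binf z := by
  by_contra hm
  push Not at hm
  obtain ⟨h1, h2, h3⟩ := wf_spec z
  have h4 := (Δ_zpow_mono (n := n) (show binf z + 1 ≤ m by omega)).trans h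
  conv_rhs at h4 => rw [h3]
  rw [zpow_add, mul_le_mul_left_iff', zpow_one] at h4
  have h5 := head_eq (fun c hc => (h1 c hc).1) h2
  rw [inf_eq_right.2 h4] at h5
  cases hL : (wf z).2 with
  | nil => rw [hL] at h5; simp at h5; rw [h5, glen_one] at hΔ; omega
  | cons a L =>
    rw [hL] at h5
    simp at h5
    exact (h1 a (by simp [hL])).2.2 h5.symm

/-- decomposition `(wf z).2 = L ++ [btail z]` -/
lemma tail_decomp {z : BraidGroup n} (h : 1 ≤ blen z) :
    ∃ L, (wf z).2 = L ++ [btail z] := by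
  unfold blen at h
  unfold btail
  rcases List.eq_nil_or_concat (wf z).2 with h0 | ⟨L, b, hL⟩
  · rw [h0] at h; simp at h
  · exact ⟨L, by rw [hL]; simp⟩

lemma tail_facts {z : BraidGroup n} (h : 1 ≤ blen z) :
    (1 ≤ btail z ∧ btail z ≤ Δ n) ∧ btail z ≠ 1 ∧
    z * (btail z)⁻¹ = z ⊓ Δ n ^ (bsup z - 1) := by
  obtain ⟨L, hL⟩ := tail_decomp h
  obtain ⟨h1, h2, h3⟩ := wf_spec z
  have ht := h1 (btail z) (by rw [hL]; simp)
  refine ⟨ht.1, ht.2.1, ?_⟩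
  have hLs : ∀ c ∈ L, 1 ≤ c ∧ c ≤ Δ n := fun c hc => (h1 c (by rw [hL]; simp [hc])).1
  rw [hL] at h2 h3
  have h4 := prefix_lem (btail z) ht.1.1 L hLs h2
  have h5 : L.prod = L.prod * btail z ⊓ Δ n ^ (L.length : ℤ) :=
    le_antisymm (le_inf (le_mul_pos _ ht.1.1) (prod_le hLs)) h4
  have h6 : bsup z - 1 = binf z + L.length := by
    unfold bsup blen; rw [hL]; simp; ring
  have h3' : z = Δ n ^ binf z * (L.prod * btail z) := by
    conv_lhs => rw [h3]
    simp
  have h7 : z * (btail z)⁻¹ = Δ n ^ binf z * L.prod := by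
    conv_lhs => rw [show z * (btail z)⁻¹ = (Δ n ^ binf z * (L.prod * btail z)) * (btail z)⁻¹ from
      congrArg (· * (btail z)⁻¹) h3']
    group
  rw [h7, h6, zpow_add]
  conv_rhs => enter [1]; rw [h3']
  rw [← mul_inf', ← h5]

lemma bsup_le (hΔ : 0 < glen (Δ n)) {z : BraidGroup n} {m : ℤ} (h : z ≤ Δ n ^ m) : bsup z ≤ m := by
  by_contra hm
  push Not at hm
  have h4 := h.trans (Δ_zpow_mono (n := n) (show m ≤ bsup z - 1 by omega))
  by_cases hk : 1 ≤ blen z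
  · obtain ⟨_, h5, h6⟩ := tail_facts hk
    rw [inf_eq_left.2 h4] at h6
    apply h5
    simpa using h6
  · have : blen z = 0 := by omega
    have h5 := (binf_le z).trans h4
    have h6 := glen_mono h5
    rw [glen_zpow, glen_zpow] at h6
    unfold bsup at h6
    rw [this] at h6
    push_cast at h6
    nlinarith

lemma head_facts (z : BraidGroup n) :
    τpow (binf z) (bhead z) = z * Δ n ^ (-binf z) ⊓ Δ n := by
  obtain ⟨h1, h2, h3⟩ := wf_spec z
  have h4 := head_eq (fun c hc => (h1 c hc).1) h2
  rw [τpow_eq]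
  unfold bhead
  rw [← h4, mul_inf', inf_mul_Δ]
  rw [← h3]
  congr 1
  group

lemma isCW_of_len_zero {z : BraidGroup n} (h : blen z = 0) : IsCW z := by
  unfold IsCW
  have : (wf z).2 = [] := by unfold blen at h; exact List.length_eq_zero_iff.1 h
  have h2 : bhead z = 1 := by unfold bhead; rw [this]; rfl
  rw [h2, τpow_eq]
  have : Δ n ^ binf z * 1 * Δ n ^ (-binf z) = 1 := by group
  rw [this]
  exact lw_one _

lemma cw_forward {x : BraidGroup n} (hk : 1 ≤ blen x) (h : IsCW x) :
    x * (x * Δ n ^ (-binf x)) * Δ n ^ (-binf x) ⊓ Δ n ^ (blen x : ℤ) ≤ x * Δ n ^ (-binf x) := by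
  obtain ⟨h1, h2, h3⟩ := wf_spec x
  have hs : ∀ c ∈ (wf x).2, 1 ≤ c ∧ c ≤ Δ n := fun c hc => (h1 c hc).1
  set c := x * Δ n ^ (-binf x) with hc
  have hc1 : 1 ≤ c := by
    have := mul_Δ_mono (-binf x) (binf_le x)
    rwa [← zpow_add, add_neg_cancel, zpow_zero] at this
  have hch : List.IsChain IsLeftWeighted ((wf x).2 ++ [c]) := by
    rw [List.isChain_append]
    refine ⟨h2, by simp, ?_⟩
    intro a ha b hb
    simp at hb
    subst hb
    obtain ⟨L, hL⟩ := tail_decomp hk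
    rw [hL] at ha
    simp at ha
    subst ha
    unfold IsCW at h
    rw [lw_def] at h ⊢
    rintro i ⟨hi1, hi2⟩
    refine h i ⟨hi1, ?_⟩
    rw [head_facts]
    exact le_inf hi2 (σ_le_Δ i)
  have h4 := prefix_lem c hc1 _ hs hch
  have h5 := (op (Δ n ^ binf x) (-binf x)).monotone h4
  rw [map_inf] at h5
  simp only [op_apply] at h5
  have e1 : Δ n ^ binf x * (wf x).2.prod * Δ n ^ (-binf x) = c := by rw [← h3]
  have e2 : Δ n ^ binf x * ((wf x).2.prod * c) * Δ n ^ (-binf x) = x * c * Δ n ^ (-binf x) := by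
    rw [← mul_assoc, ← h3]
  have e3 : Δ n ^ binf x * (Δ n ^ ((wf x).2.length : ℤ)) * Δ n ^ (-binf x) = Δ n ^ (blen x : ℤ) := by
    unfold blen
    rw [← zpow_add, ← zpow_add]; congr 1; ring
  rw [e1, e2, e3] at h5
  exact h5

lemma cw_backward {z : BraidGroup n} (hk : 1 ≤ blen z)
    (h : (z * Δ n ^ (-binf z) ⊓ Δ n ^ ((blen z : ℤ) - 1)) * Δ n ⊓
      z * (z * Δ n ^ (-binf z) ⊓ Δ n) * Δ n ^ (-binf z) ≤ z * Δ n ^ (-binf z)) : IsCW z := by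
  unfold IsCW
  rw [lw_def, head_facts]
  rintro i ⟨h1, h2⟩
  obtain ⟨_, _, ht⟩ := tail_facts hk
  rw [le_inv_mul_iff'] at h1
  have e : z * Δ n ^ (-binf z) ⊓ Δ n ^ ((blen z : ℤ) - 1) = z * (btail z)⁻¹ * Δ n ^ (-binf z) := by
    rw [ht, inf_mul_Δ]
    congr 1
    rw [← zpow_add]; unfold bsup; congr 1; ring
  rw [e] at h
  have h3 : z * σ i * Δ n ^ (-binf z) ≤ z * (btail z)⁻¹ * Δ n ^ (-binf z) * Δ n := by
    have h4 : z * σ i ≤ z * (btail z)⁻¹ * Δ n := by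
      rw [mul_assoc, mul_le_mul_left_iff', le_inv_mul_iff']
      exact h1
    have := mul_Δ_mono (-binf z) h4
    refine this.trans (le_of_eq ?_)
    group
  have h5 : z * σ i * Δ n ^ (-binf z) ≤ z * (z * Δ n ^ (-binf z) ⊓ Δ n) * Δ n ^ (-binf z) :=
    mul_Δ_mono _ ((mul_le_mul_left_iff' z).2 h2)
  have h6 := (le_inf h3 h5).trans h
  rw [mul_Δ_le_iff] at h6
  apply not_σ_le_one i
  rw [← mul_le_mul_left_iff' z, mul_one]; exact h6

lemma glen_Δ_pos {x : BraidGroup n} (hl : 1 ≤ blen x) : 0 < glen (Δ n) := by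
  obtain ⟨⟨h1, h2⟩, h3, _⟩ := tail_facts hl
  by_contra h
  push Not at h
  have h4 : glen (btail x) ≤ 0 := (glen_mono h2).trans h
  exact h3 (eq_of_glen h1 (by rw [glen_one]; exact h4)).symm

end BraidAux

namespace BraidAux

variable {n : ℕ}

lemma op_comm {g h : BraidGroup n} (hgh : g * h = h * g) (k m : ℤ) (a : BraidGroup n) :
    op g k (op h m a) = op h m (op g k a) := by
  simp only [op_apply]
  have e1 : g * (h * a * Δ n ^ m) * Δ n ^ k = (g * h) * a * (Δ n ^ (m + k)) := by group
  have e2 : h * (g * a * Δ n ^ k) * Δ n ^ m = (h * g) * a * (Δ n ^ (m + k)) := by group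
  rw [e1, e2, hgh]

lemma glen_op (g : BraidGroup n) (k : ℤ) (a : BraidGroup n) :
    glen (op g k a) = glen a + (glen g + k * glen (Δ n)) := by
  rw [op_apply, glen_mul, glen_mul, glen_zpow]; ring

lemma D_iter (k : ℕ) (a : BraidGroup n) : (op 1 1)^[k] a = a * Δ n ^ (k : ℤ) := by
  induction k with
  | zero => simp
  | succ k ih =>
    rw [Function.iterate_succ_apply', ih, op_apply]
    push_cast
    rw [zpow_add]; group

lemma le_D (c : BraidGroup n) : c ≤ op 1 1 c := by
  rw [op_apply, one_mul, zpow_one]; exact le_mul_pos c Δ_pos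

lemma Δ_move {a b : BraidGroup n} {k : ℤ} : a ≤ b * Δ n ^ (-k) ↔ a * Δ n ^ k ≤ b := by
  rw [← mul_Δ_le_iff k]
  have : b * Δ n ^ (-k) * Δ n ^ k = b := by group
  rw [this]

lemma Δ_move' {a b : BraidGroup n} {k : ℤ} : a * Δ n ^ (-k) ≤ b ↔ a ≤ b * Δ n ^ k := by
  rw [← mul_Δ_le_iff k]
  have : a * Δ n ^ (-k) * Δ n ^ k = a := by group
  rw [this]

lemma cyc_eq (z : BraidGroup n) : cyc z =
    (z * Δ n ^ (-binf z) ⊓ Δ n)⁻¹ * z * (z * Δ n ^ (-binf z) ⊓ Δ n) := by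
  unfold cyc; rw [head_facts]

lemma binf_cyc (hΔ : 0 < glen (Δ n)) (z : BraidGroup n) : binf z ≤ binf (cyc z) := by
  apply le_binf hΔ
  rw [cyc_eq, mul_assoc, le_inv_mul_iff']
  set t := z * Δ n ^ (-binf z) ⊓ Δ n with ht
  have h1 : t * Δ n ^ binf z ≤ z := Δ_move.1 inf_le_left
  have h2 : 1 ≤ t := le_inf (by rw [Δ_move, one_mul]; exact binf_le z) Δ_pos
  exact h1.trans (le_mul_pos z h2)

lemma decyc_of_zero {z : BraidGroup n} (h : blen z = 0) : decyc z = z := by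
  have : (wf z).2 = [] := by unfold blen at h; exact List.length_eq_zero_iff.1 h
  unfold decyc btail
  rw [this]; simp

lemma bsup_decyc (hΔ : 0 < glen (Δ n)) (z : BraidGroup n) : bsup (decyc z) ≤ bsup z := by
  by_cases h : blen z = 0
  · rw [decyc_of_zero h]
  · obtain ⟨⟨h1, h2⟩, _, h3⟩ := tail_facts (z := z) (by omega)
    apply bsup_le hΔ
    unfold decyc
    rw [mul_assoc, h3, ← mul_le_mul_left_iff' (btail z)⁻¹, inv_mul_cancel_left]
    refine inf_le_right.trans ?_
    rw [le_inv_mul_iff']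
    refine (mul_Δ_mono _ h2).trans (le_of_eq ?_)
    rw [← zpow_one_add]; congr 1; ring

lemma const_of_periodic {β : Type*} (f : β → β) (φ : β → ℤ) (h : ∀ y, φ y ≤ φ (f y)) {y : β}
    {M : ℕ} (hM : 0 < M) (hy : f^[M] y = y) (i : ℕ) : φ (f^[i] y) = φ y := by
  have hm : Monotone (fun j => φ (f^[j] y)) := by
    apply monotone_nat_of_le_succ
    intro j
    rw [Function.iterate_succ_apply']
    exact h _
  have h1 : f^[M * i] y = y := by
    rw [Function.iterate_mul]
    exact Function.iterate_fixed hy i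
  apply le_antisymm
  · have := hm (show i ≤ M * i from Nat.le_mul_of_pos_left i hM)
    simpa only [h1] using this
  · exact hm (Nat.zero_le i)

lemma cyc_iter {y : BraidGroup n} (h : ∀ i, binf (cyc^[i] y) = binf y) (i : ℕ) :
    cyc^[i] y = ((FF (op y (-binf y)) (op 1 1))^[i] 1)⁻¹ * y *
      (FF (op y (-binf y)) (op 1 1))^[i] 1 := by
  induction i with
  | zero => simp
  | succ i ih =>
    have hb := h i
    rw [Function.iterate_succ_apply', Function.iterate_succ_apply', cyc_eq, hb]
    rw [ih]
    set g := (FF (op y (-binf y)) (op 1 1))^[i] 1 with hg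
    have e : FF (op y (-binf y)) (op 1 1) g = g * (g⁻¹ * y * g * Δ n ^ (-binf y) ⊓ Δ n) := by
      unfold FF
      simp only [op_apply]
      rw [mul_inf']
      congr 1 <;> group
    rw [e]
    group

lemma decyc_iter {y : BraidGroup n} (h : ∀ i, bsup (decyc^[i] y) = bsup y)
    (h' : ∀ i, 1 ≤ blen (decyc^[i] y)) (i : ℕ) :
    decyc^[i] y = ((FF (op y⁻¹ (bsup y - 1)) (op 1 0))^[i] 1)⁻¹ * y *
      (FF (op y⁻¹ (bsup y - 1)) (op 1 0))^[i] 1 := by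
  induction i with
  | zero => simp
  | succ i ih =>
    obtain ⟨-, -, ht⟩ := tail_facts (h' i)
    have hb := h i
    rw [Function.iterate_succ_apply', Function.iterate_succ_apply']
    rw [hb] at ht
    set w := decyc^[i] y with hw
    change w = _ at ih
    set g := (FF (op y⁻¹ (bsup y - 1)) (op 1 0))^[i] 1 with hg
    have e : FF (op y⁻¹ (bsup y - 1)) (op 1 0) g = g * (btail w)⁻¹ := by
      have h1 : (btail w)⁻¹ = w⁻¹ * (w ⊓ Δ n ^ (bsup y - 1)) := by rw [← ht]; group
      unfold FF
      simp only [op_apply]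
      rw [h1, mul_inf', mul_inf', inf_comm]
      congr 1
      · group
      · rw [ih]; group
    have hd : decyc w = btail w * w * (btail w)⁻¹ := rfl
    rw [hd, e]
    generalize btail w = t
    rw [ih]
    group

lemma decyc_len {y : BraidGroup n} (hy : 1 ≤ blen y) {N : ℕ} (hN : 0 < N)
    (h : decyc^[N] y = y) (i : ℕ) : 1 ≤ blen (decyc^[i] y) := by
  by_contra hi
  have h0 : blen (decyc^[i] y) = 0 := by omega
  have h1 : ∀ j, decyc^[j] (decyc^[i] y) = decyc^[i] y :=
    fun j => Function.iterate_fixed (decyc_of_zero h0) j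
  have h2 : decyc^[N * i] y = y := by
    rw [Function.iterate_mul]
    exact Function.iterate_fixed h i
  have h3 : N * i = (N * i - i) + i := by
    have := Nat.le_mul_of_pos_left i hN
    omega
  rw [h3, Function.iterate_add_apply, h1] at h2
  rw [h2] at h0
  omega

lemma exists_le_Δ (g : BraidGroup n) : ∃ m : ℕ, g ≤ Δ n ^ (2 * (m : ℤ)) := by
  obtain ⟨m, hm⟩ := exists_Δ_le g⁻¹
  refine ⟨m, ?_⟩
  rw [← mul_le_mul_left_iff' g, mul_inv_cancel] at hm
  rw [Δ_move', one_mul] at hm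
  exact hm

theorem main (x : BraidGroup n) (hcw : IsCW x) (hl : 2 ≤ blen x) (y : BraidGroup n)
    (hy : y ∈ RSSS x) : IsCW y := by
  obtain ⟨hconj, ⟨M, hM, hcyc⟩, ⟨N, hN, hdec⟩⟩ := hy
  by_cases hy0 : blen y = 0
  · exact isCW_of_len_zero hy0
  have hy1 : 1 ≤ blen y := by omega
  have hΔ : 0 < glen (Δ n) := glen_Δ_pos hy1
  -- a positive conjugator
  obtain ⟨γ, hγ1, hγ⟩ : ∃ γ : BraidGroup n, 1 ≤ γ ∧ y * γ = γ * x := by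
    obtain ⟨c, hc⟩ := isConj_iff.1 hconj
    obtain ⟨k, hk⟩ := exists_Δ_le c
    refine ⟨c * Δ n ^ (2 * (k : ℤ)), ?_, ?_⟩
    · rw [← Δ_move', one_mul]; exact hk
    · rw [← hc, mul_assoc c _ x, Δ_zpow_even_comm]; group
  have hyγ : ∀ c, y * (γ * c) = γ * (x * c) := fun c => by rw [← mul_assoc, hγ, mul_assoc]
  have hyγ' : ∀ c, y⁻¹ * (γ * c) = γ * (x⁻¹ * c) := fun c => by
    rw [inv_mul_eq_iff_eq_mul, hyγ]; simp
  obtain ⟨m, hm⟩ := exists_le_Δ γ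
  -- cycling data
  have hbc := fun i => const_of_periodic cyc binf (binf_cyc hΔ) hM hcyc i
  have hz := cyc_iter hbc M
  rw [hcyc] at hz
  have hbd : ∀ i, bsup (decyc^[i] y) = bsup y := fun i => by
    have := const_of_periodic decyc (fun w => - bsup w)
      (fun w => by have := bsup_decyc hΔ w; omega) hN hdec i
    omega
  have hz' := decyc_iter hbd (decyc_len hy1 hN hdec) N
  rw [hdec] at hz'
  have central : ∀ z : BraidGroup n, y = z⁻¹ * y * z → z * y = y * z := fun z h => by
    have : z * y = z * (z⁻¹ * y * z) := congrArg (z * ·) h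
    rw [this]; group
  have one_comm : ∀ g : BraidGroup n, g * 1 = 1 * g := fun g => by simp
  -- facts at γ
  have hX1 : γ ≤ op y (-binf x) γ := by
    rw [op_apply, hγ, mul_assoc]
    refine le_mul_pos γ ?_
    rw [Δ_move, one_mul]; exact binf_le x
  have hX2 : op y (-binf x) γ ≤ (op 1 1)^[blen x] γ := by
    rw [op_apply, hγ, mul_assoc, D_iter, mul_le_mul_left_iff', Δ_move', ← zpow_add]
    refine (le_bsup x).trans (le_of_eq ?_)
    unfold bsup; congr 1; ring
  have hX3 : op y (-binf x) (op y (-binf x) γ) ⊓ (op 1 1)^[blen x] γ ≤ op y (-binf x) γ := by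
    have h := (mul_le_mul_left_iff' γ).2 (cw_forward (by omega) hcw)
    rw [mul_inf'] at h
    rw [D_iter]
    simp only [op_apply]
    rw [hγ]
    have e : y * (γ * x * Δ n ^ (-binf x)) * Δ n ^ (-binf x)
        = γ * (x * (x * Δ n ^ (-binf x)) * Δ n ^ (-binf x)) := by
      rw [mul_assoc γ x, hyγ]; simp only [mul_assoc]
    rw [e, mul_assoc γ x]
    exact h
  have hE : (FF (op y (-binf x)) (op 1 1))^[blen x] γ = op y (-binf x) γ :=
    lemE (op_comm (one_comm y) _ _) le_D (by omega) hX1 hX2 hX3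
  -- Step 1
  have s1 : binf x ≤ binf y := by
    by_contra hlt
    push Not at hlt
    set z := (FF (op y (-binf y)) (op 1 1))^[M] 1 with hzdef
    have hc := central z hz
    have := recur (R := op z 0) (β := γ * Δ n ^ (-(2 * (m : ℤ)))) (op_comm (one_comm y) (-binf y) 1)
      (op_comm hc _ _) (op_comm (one_comm z) _ _)
      (len := glen) (fun h => glen_mono h) (fun h => eq_of_glen h) (glen_op _ _) (glen_op _ _)
      hM (a := 1) (by rw [op_apply, ← hzdef]; simp) (by rw [Δ_move', one_mul]; exact hm)
      (by
        simp only [op_apply]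
        rw [hyγ, one_mul, mul_assoc, mul_assoc, mul_le_mul_left_iff', zpow_one]
        rw [Δ_move, ← mul_Δ_le_iff (2 * (m : ℤ))]
        refine le_trans (le_of_eq ?_) ((Δ_zpow_mono (show binf y + 1 ≤ binf x by omega)).trans
          ((binf_le x).trans (le_of_eq ?_)))
        · rw [← zpow_add_one, ← zpow_add, ← zpow_add]; congr 1; ring
        · group)
    simp only [op_apply] at this
    rw [one_mul, one_mul, mul_one, Δ_move, ← zpow_add] at this
    have := le_binf hΔ this
    omega
  -- Step 2
  have s2 : binf y ≤ binf x := by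
    by_contra hlt
    push Not at hlt
    have := recur (R := op y (-binf x)) (β := 1) (op_comm (one_comm y) (-binf x) 1)
      (fun _ => rfl) (op_comm (one_comm y) _ _)
      (len := glen) (fun h => glen_mono h) (fun h => eq_of_glen h) (glen_op _ _) (glen_op _ _)
      (show 0 < blen x by omega) hE hγ1
      (by
        simp only [op_apply]
        rw [one_mul, one_mul, mul_one, Δ_move, ← zpow_add]
        exact (Δ_zpow_mono (by omega)).trans (binf_le y))
    simp only [op_apply] at this
    rw [one_mul, hγ, mul_assoc, mul_le_mul_left_iff', Δ_move, ← zpow_add] at this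
    have := le_binf hΔ this
    omega
  have hu : binf y = binf x := le_antisymm s2 s1
  -- Step 3
  have s3 : bsup y ≤ bsup x := by
    by_contra hlt
    push Not at hlt
    set z := (FF (op y⁻¹ (bsup y - 1)) (op 1 0))^[N] 1 with hzdef
    have hc := central z hz'
    have hc' : z * y⁻¹ = y⁻¹ * z := (show Commute z y from hc).inv_right
    have := recur (R := op z 0) (β := γ * Δ n ^ (-(2 * (m : ℤ))))
      (op_comm (one_comm y⁻¹) (bsup y - 1) 0)
      (op_comm hc' _ _) (op_comm (one_comm z) _ _)
      (len := glen) (fun h => glen_mono h) (fun h => eq_of_glen h) (glen_op _ _) (glen_op _ _)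
      hN (a := 1) (by rw [op_apply, ← hzdef]; simp) (by rw [Δ_move', one_mul]; exact hm)
      (by
        simp only [op_apply]
        rw [hyγ', one_mul, zpow_zero, mul_one, mul_assoc, mul_le_mul_left_iff', mul_assoc,
          le_inv_mul_iff', ← zpow_add, add_comm, zpow_add, mul_Δ_le_iff]
        exact (le_bsup x).trans (Δ_zpow_mono (by omega)))
    simp only [op_apply] at this
    rw [one_mul, zpow_zero, mul_one, mul_one, le_inv_mul_iff', mul_one] at this
    have := bsup_le hΔ this
    omega
  -- Step 4
  have s4 : bsup x ≤ bsup y := by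
    by_contra hlt
    push Not at hlt
    have hl1 : ((blen x - 1 : ℕ) : ℤ) = (blen x : ℤ) - 1 := by omega
    have := lemS (op_comm (one_comm y) (-binf x) 1) le_D (by omega) hX1 hX2 hX3 (s := 2 * m) hm
      (by rw [D_iter]; push_cast; exact Δpow_le_mul hγ1 _)
      (by
        rw [D_iter, op_apply, Δ_move', hl1, mul_assoc, ← zpow_add, Δ_zpow_even_comm, mul_Δ_le_iff]
        refine (le_bsup y).trans (Δ_zpow_mono ?_)
        unfold bsup at hlt ⊢
        omega)
    rw [D_iter, op_apply, hl1, hγ, mul_assoc, mul_le_mul_left_iff', Δ_move', ← zpow_add] at this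
    have := bsup_le hΔ this
    unfold bsup at this
    omega
  have hlen : blen y = blen x := by
    unfold bsup at s3 s4
    omega
  -- conclusion
  rw [← hu] at hE
  rw [← hlen] at hE hl
  have hY1 : 1 ≤ op y (-binf y) 1 := by
    rw [op_apply, mul_one, Δ_move, one_mul]; exact binf_le y
  set z := (FF (op y (-binf y)) (op 1 1))^[M] 1 with hzdef
  have hc := central z hz
  have hC := lemC (R := op z 0) (op_comm (one_comm y) (-binf y) 1)
    (op_comm hc _ _) (op_comm (one_comm z) _ _)
    (len := glen) (fun h => glen_mono h) (fun h => eq_of_glen h) (glen_op _ _) (glen_op _ _)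
    le_D hM hY1
    (by
      rw [D_iter, op_apply, mul_one, one_mul, Δ_move', ← zpow_add]
      refine (le_bsup y).trans (le_of_eq ?_)
      unfold bsup; congr 1; ring)
    (by rw [op_apply, ← hzdef]; simp) hγ1 hE
  have hDD := lemD (op_comm (one_comm y) (-binf y) 1) le_D hl hY1 hC
  apply cw_backward hy1
  have hl1 : ((blen y - 1 : ℕ) : ℤ) = (blen y : ℤ) - 1 := by omega
  rw [D_iter, hl1] at hDD
  unfold FF at hDD
  simp only [op_apply, one_mul, mul_one, zpow_one] at hDD
  exact hDD

end BraidAux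

/-- if `x` is cyclically weighted with canonical length `ℓ(x) ≥ 2`,
then every braid in `RSSS(x)` is cyclically weighted. -/
theorem rsss_all_cw (n : ℕ) (x : BraidGroup n) (hcw : IsCW x) (hl : 2 ≤ blen x) :
    ∀ y ∈ RSSS x, IsCW y := by
  exact fun y hy => BraidAux.main x hcw hl y hy

end BraidGroup
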